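/- arXiv:2502.20958 — 2 statements merged into one kernel-verified Lean document; each statement's English description precedes it below -/
import Mathlib

section
/- For 1 ≤ a ≤ b ≤ n define elements B_{[a,b]} of U = U^ı(sl_{n+1}) by B_{[a,a]} = B_a and B_{[a,b]} = B_{[a,b−1]} B_b − q B_b B_{[a,b−1]} for b > a. Then the set of all products B_{[a_1,b_1]} B_{[a_2,b_2]} ⋯ B_{[a_m,b_m]} (m ≥ 0, empty product equal to 1), where the words v_{a_1}⋯v_{b_1} ≥ v_{a_2}⋯v_{b_2} ≥ ⋯ ≥ v_{a_m}⋯v_{b_m} in lexicographic order, is a ℚ(q)-basis of U (the Lyndon basis, which coincides with the Xu–Yang PBW-type basis). -/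
/-!
Ordered products of the root vectors `B_{[a,b]}` form a basis of `U`.

*Spanning.* Filter `U` by word length. In the associated graded algebra the Serre relations become
homogeneous, and the root vectors satisfy the usual straightening rules (`straight`): for two
segments `[a,b] < [c,d]` with `c ≠ b + 1`, the product `B_{[a,b]} B_{[c,d]}` is a combination of
`B_{[c,d]} B_{[a,b]}` and, when the segments overlap, of `B_{[a,d]} B_{[c,b]}`; when `c = b + 1` the
`q`-commutator is the root vector `B_{[a,d]}`. Each rule replaces a list of segments by
lexicographically larger ones of the same total length, modulo lower terms of the filtration, so
that iterating it terminates (`span_sorted`).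

*Independence.* In the `q`-shuffle algebra on the letters, the left multiplications `S_i` by
letters and the deletions `∂_i` of a first letter satisfy the homogeneous Serre relations on the
subalgebra `M` generated by the letters, and the operators `S_i + (1 - q²)⁻¹ ∂_i` satisfy the
relations of `U` (`Bop_comm`, `Bop_serre`). The resulting action on the empty word sends a product
of root vectors to a nonzero multiple of the `q`-shuffle product of the corresponding segment words,
plus terms of smaller degree (`prodE_lead`, from `S_glue`). For a nonincreasing list of segments, the
largest word of this shuffle product is the concatenation of the segments (`le_cat`), its
coefficient is nonzero since all coefficients are Laurent polynomials in `q` that are zero or take a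
positive value at `q = 1` (`Sp_pos`), and the concatenation determines the list (`cat_inj`). The
family is therefore triangular (`indep_model`).
-/

/-- The lexicographic order on words over the alphabet `v_0 < v_1 < ⋯ < v_{n-1}`
(indexed by `Fin n`), in which a word is smaller than any word having it as a proper prefix. -/
def LexLt {n : ℕ} (x y : List (Fin n)) : Prop := List.Lex (· < ·) x y

/-- The order `≺` : `x ≺ y` iff `ℓ(x) < ℓ(y)`, or `ℓ(x) = ℓ(y)` and `x > y` lexicographically. -/
def PrecLt {n : ℕ} (x y : List (Fin n)) : Prop :=
  x.length < y.length ∨ (x.length = y.length ∧ LexLt y x)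

/-- The order `≼` : `x ≼ y` iff `x ≺ y` or `x = y`. -/
def PrecLe {n : ℕ} (x y : List (Fin n)) : Prop := PrecLt x y ∨ x = y

/-- A nonempty word is Lyndon if it is lexicographically strictly smaller than every proper
nonempty suffix of itself. -/
def IsLyndon {n : ℕ} (l : List (Fin n)) : Prop :=
  l ≠ [] ∧ ∀ k : ℕ, 0 < k → k < l.length → LexLt l (l.drop k)

/-- `B_w = b_{i_1} ⋯ b_{i_k} ∈ R` for the word `w = v_{i_1} ⋯ v_{i_k}` (`B_w = 1` for `w = []`). -/
def Bword {n : ℕ} {R : Type*} [Monoid R] (b : Fin n → R) (w : List (Fin n)) : R :=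
  (w.map b).prod

/-- A word `g` is good if `B_g` does not lie in the `K`-linear span of the `B_w` with `w ≺ g`. -/
def IsGood (K : Type*) {n : ℕ} {R : Type*} [Field K] [Ring R] [Algebra K R]
    (b : Fin n → R) (g : List (Fin n)) : Prop :=
  Bword b g ∉ Submodule.span K (Bword b '' {w | PrecLt w g})

/-- The defining relations of the split ıquantum group `U^ı(sl_{n+1})` of type `A_n` with
parameters `ξ_i = q⁻¹` : `B_iB_j = B_jB_i` for `|i-j| ≥ 2` and
`B_i²B_j - (q+q⁻¹) B_iB_jB_i + B_jB_i² = B_j` for `|i-j| = 1`. -/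
inductive UiRel (n : ℕ) :
    FreeAlgebra (RatFunc ℚ) (Fin n) → FreeAlgebra (RatFunc ℚ) (Fin n) → Prop
  | comm (i j : Fin n) (h : (i : ℕ) + 1 < (j : ℕ)) :
      UiRel n (FreeAlgebra.ι (RatFunc ℚ) i * FreeAlgebra.ι (RatFunc ℚ) j)
        (FreeAlgebra.ι (RatFunc ℚ) j * FreeAlgebra.ι (RatFunc ℚ) i)
  | serre (i j : Fin n) (h : (i : ℕ) + 1 = (j : ℕ) ∨ (j : ℕ) + 1 = (i : ℕ)) :
      UiRel n
        (FreeAlgebra.ι (RatFunc ℚ) i * FreeAlgebra.ι (RatFunc ℚ) i * FreeAlgebra.ι (RatFunc ℚ) j +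
          FreeAlgebra.ι (RatFunc ℚ) j * FreeAlgebra.ι (RatFunc ℚ) i * FreeAlgebra.ι (RatFunc ℚ) i)
        (((RatFunc.X : RatFunc ℚ) + (RatFunc.X : RatFunc ℚ)⁻¹) • (FreeAlgebra.ι (RatFunc ℚ) i *
            FreeAlgebra.ι (RatFunc ℚ) j * FreeAlgebra.ι (RatFunc ℚ) i) +
          FreeAlgebra.ι (RatFunc ℚ) j)

/-- The split ıquantum group `U = U^ı(sl_{n+1})` of type `A_n`, the quotient of the free
`ℚ(q)`-algebra on `B_1, …, B_n` by the defining relations. -/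
abbrev Ui (n : ℕ) := RingQuot (UiRel n)

/-- The generators `B_1, …, B_n` of `U^ı(sl_{n+1})`. -/
noncomputable def Bgen (n : ℕ) (i : Fin n) : Ui n :=
  RingQuot.mkAlgHom (RatFunc ℚ) (UiRel n) (FreeAlgebra.ι (RatFunc ℚ) i)

/-- The words of the form `v_a v_{a+1} ⋯ v_b` : nonempty words with consecutive increasing
letters. -/
def IsSegment {n : ℕ} (l : List (Fin n)) : Prop :=
  l ≠ [] ∧ l.Chain' (fun x y : Fin n => (y : ℕ) = (x : ℕ) + 1)

/-- Auxiliary recursion (on the reversed word) for `B_{[a,b]}` : for a reversed segment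
`v_b v_{b-1} ⋯ v_a`, produce `B_{[a,b]}` where `B_{[a,a]} = B_a` and
`B_{[a,b]} = B_{[a,b-1]} B_b - q B_b B_{[a,b-1]}`. -/
noncomputable def BsegRev {n : ℕ} : List (Fin n) → Ui n
  | [] => 1
  | [i] => Bgen n i
  | i :: j :: t => BsegRev (j :: t) * Bgen n i -
      (RatFunc.X : RatFunc ℚ) • (Bgen n i * BsegRev (j :: t))

/-- `B_{[a,b]} ∈ U^ı(sl_{n+1})` attached to the segment word `v_a v_{a+1} ⋯ v_b`, defined by
`B_{[a,a]} = B_a` and `B_{[a,b]} = B_{[a,b-1]} B_b - q B_b B_{[a,b-1]}`. -/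
noncomputable def Bseg {n : ℕ} (l : List (Fin n)) : Ui n := BsegRev l.reverse

namespace UiPBW

/-! ### Root vectors in an algebra with the homogeneous quantum Serre relations -/

section Serre

variable {K : Type*} [Field K] {A : Type*} [Ring A] [Algebra K A]

/-- The root vector `f_{[a, a+k]}`, defined by `f_{[a,a]} = f_a` and
`f_{[a,b]} = f_{[a,b-1]} f_b - q f_b f_{[a,b-1]}`. Segments are encoded by their first letter `a`
and by their length minus one, `k`. -/
def E (q : K) (f : ℕ → A) (a : ℕ) : ℕ → A
  | 0 => f a
  | k + 1 => E q f a k * f (a + k + 1) - q • (f (a + k + 1) * E q f a k)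

theorem commute_E {q : K} {f : ℕ → A} {x : A} {a : ℕ} :
    ∀ k : ℕ, (∀ i, a ≤ i → i ≤ a + k → Commute x (f i)) → Commute x (E q f a k)
  | 0, h => h a le_rfl le_rfl
  | k + 1, h => by
    have h1 : Commute x (E q f a k) := commute_E k fun i hi hi' => h i hi (by omega)
    have h2 : Commute x (f (a + k + 1)) := h _ (by omega) (by omega)
    exact (h1.mul_right h2).sub_right ((h2.mul_right h1).smul_right q)

/-- If `x` `q`-commutes with `f_a` and commutes with `f_{a+1}, …, f_{a+k}`, then it `q`-commutes
with `f_{[a,a+k]}`. -/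
theorem qcomm_E_left {q c : K} {f : ℕ → A} {x : A} {a : ℕ} (ha : f a * x = c • (x * f a)) :
    ∀ k : ℕ, (∀ i, a < i → i ≤ a + k → Commute x (f i)) →
      E q f a k * x = c • (x * E q f a k)
  | 0, _ => ha
  | k + 1, h => by
    have h1 := qcomm_E_left (q := q) ha k fun i hi hi' => h i hi (by omega)
    have h2 : x * f (a + k + 1) = f (a + k + 1) * x := h _ (by omega) (by omega)
    set g := f (a + k + 1)
    set y := E q f a k
    change (y * g - q • (g * y)) * x = c • (x * (y * g - q • (g * y)))
    have e1 : y * g * x = c • (x * (y * g)) := by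
      rw [mul_assoc, ← h2, ← mul_assoc, h1, smul_mul_assoc, mul_assoc]
    have e2 : g * y * x = c • (x * (g * y)) := by
      rw [mul_assoc, h1, mul_smul_comm, ← mul_assoc, ← h2, mul_assoc]
    rw [sub_mul, smul_mul_assoc, e1, e2, mul_sub, mul_smul_comm, smul_sub, smul_comm]

/-- Far commutativity gives associativity of the `q`-bracket: a segment may be cut anywhere. -/
theorem E_split {q : K} {f : ℕ → A} (hc : ∀ i j, i + 1 < j → f i * f j = f j * f i) (a k : ℕ) :
    ∀ m : ℕ, E q f a (k + m + 1) =
      E q f a k * E q f (a + k + 1) m - q • (E q f (a + k + 1) m * E q f a k)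
  | 0 => rfl
  | m + 1 => by
    have ih := E_split hc a k m (q := q)
    have hg : f (a + k + 1 + m + 1) * E q f a k = E q f a k * f (a + k + 1 + m + 1) :=
      commute_E k fun i _ hi' => (hc i _ (by omega)).symm
    have e1 : E q f a (k + (m + 1) + 1) = E q f a (k + m + 1) * f (a + k + 1 + m + 1) -
        q • (f (a + k + 1 + m + 1) * E q f a (k + m + 1)) := by
      rw [show a + k + 1 + m + 1 = a + (k + m + 1) + 1 by omega]; rfl
    have e2 : E q f (a + k + 1) (m + 1) = E q f (a + k + 1) m * f (a + k + 1 + m + 1) -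
        q • (f (a + k + 1 + m + 1) * E q f (a + k + 1) m) := rfl
    rw [e1, e2, ih]
    generalize f (a + k + 1 + m + 1) = g at *
    generalize E q f a k = x at *
    generalize E q f (a + k + 1) m = y at *
    have h1 : x * (g * y) = g * (x * y) := by rw [← mul_assoc, ← hg, mul_assoc]
    simp only [mul_sub, sub_mul, smul_mul_assoc, mul_smul_comm, smul_sub, mul_assoc, hg, h1]
    abel

variable {q : K} {f : ℕ → A} (hq : q ≠ 0) (hq2 : q + q⁻¹ ≠ 0)
  (hc : ∀ i j, i + 1 < j → f i * f j = f j * f i)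
  (hs : ∀ i j, (i + 1 = j ∨ j + 1 = i) →
    f i * f i * f j + f j * f i * f i = (q + q⁻¹) • (f i * f j * f i))

include hc in
theorem commute_far {a k i : ℕ} (h : a + k + 1 < i ∨ i + 1 < a) : Commute (f i) (E q f a k) :=
  commute_E k fun j hj hj' => by
    rcases h with h | h
    · exact (hc j i (by omega)).symm
    · exact hc i j (by omega)

include hq hc hs in
theorem qcomm_first (a : ℕ) : ∀ k : ℕ,
    f a * E q f a (k + 1) = q⁻¹ • (E q f a (k + 1) * f a)
  | 0 => by
    have h := hs a (a + 1) (Or.inl rfl)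
    simp only [E, add_zero]
    generalize f a = x at *
    generalize f (a + 1) = y at *
    simp only [mul_sub, sub_mul, smul_mul_assoc, mul_smul_comm, smul_sub, mul_assoc,
      smul_smul, inv_mul_cancel₀ hq, one_smul] at h ⊢
    rw [sub_eq_sub_iff_add_eq_add, h, add_smul, add_comm]
  | k + 1 => by
    have ih := qcomm_first a k
    have hg : f a * f (a + (k + 1) + 1) = f (a + (k + 1) + 1) * f a := hc _ _ (by omega)
    have e : E q f a (k + 1 + 1) = E q f a (k + 1) * f (a + (k + 1) + 1) -
      q • (f (a + (k + 1) + 1) * E q f a (k + 1)) := rfl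
    rw [e]
    generalize f (a + (k + 1) + 1) = g at *
    generalize E q f a (k + 1) = y at *
    rw [mul_sub, mul_smul_comm, ← mul_assoc, ← mul_assoc, ih, hg, mul_assoc g, ih]
    simp only [sub_mul, smul_mul_assoc, mul_smul_comm, smul_sub, mul_assoc, hg]
    rw [smul_comm]

include hq hc hs in
theorem qcomm_last (a : ℕ) : ∀ k : ℕ,
    E q f a (k + 1) * f (a + k + 1) = q⁻¹ • (f (a + k + 1) * E q f a (k + 1))
  | 0 => by
    have h := hs (a + 1) a (Or.inr rfl)
    simp only [E, add_zero]
    generalize f a = x at *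
    generalize f (a + 1) = y at *
    simp only [mul_sub, sub_mul, smul_mul_assoc, mul_smul_comm, smul_sub, mul_assoc,
      smul_smul, inv_mul_cancel₀ hq, one_smul] at h ⊢
    rw [sub_eq_sub_iff_add_eq_add, add_comm (x * _), h, add_smul, add_comm]
  | k + 1 => by
    have ih := qcomm_last (a + k + 1) 0
    have e : E q f a (k + 1 + 1) = _ := E_split hc a k 1 (q := q)
    have hg : f (a + (k + 1) + 1) * E q f a k = E q f a k * f (a + (k + 1) + 1) :=
      commute_far hc (Or.inl (by omega))
    rw [e]
    rw [show a + k + 1 + 0 + 1 = a + (k + 1) + 1 by omega, zero_add] at ih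
    generalize f (a + (k + 1) + 1) = g at *
    generalize E q f (a + k + 1) 1 = y at *
    generalize E q f a k = x at *
    have h1 : x * (g * y) = g * (x * y) := by rw [← mul_assoc, ← hg, mul_assoc]
    simp only [mul_sub, sub_mul, smul_mul_assoc, mul_smul_comm, smul_sub, mul_assoc, ih, ← hg, h1]
    rw [← mul_assoc y, ih, smul_mul_assoc, mul_assoc]
    rw [smul_comm q]

include hq hq2 hc hs in
/-- The rank three computation: `f_{a+1}` commutes with `f_{[a,a+2]}`. The commutator is
`(q + q⁻¹)⁻¹` times a combination of the two Serre relations for `f_{a+1}`. -/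
theorem commute_mid_base (a : ℕ) : Commute (f (a + 1)) (E q f a 2) := by
  have s1 := hs (a + 1) a (Or.inr rfl)
  have s3 := hs (a + 1) (a + 2) (Or.inl rfl)
  have h13 := hc a (a + 2) (by omega)
  change f (a + 1) * ((f a * f (a + 1) - q • (f (a + 1) * f a)) * f (a + 2) -
    q • (f (a + 2) * (f a * f (a + 1) - q • (f (a + 1) * f a)))) =
    ((f a * f (a + 1) - q • (f (a + 1) * f a)) * f (a + 2) -
    q • (f (a + 2) * (f a * f (a + 1) - q • (f (a + 1) * f a)))) * f (a + 1)
  generalize f a = x at *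
  generalize f (a + 1) = y at *
  generalize f (a + 2) = z at *
  have h13' : ∀ t, z * (x * t) = x * (z * t) := fun t => by
    rw [← mul_assoc, ← h13, mul_assoc]
  have r1 := congrArg (fun t => z * t) s1
  have r2 := congrArg (fun t => t * z) s1
  have r3 := congrArg (fun t => x * t) s3
  have r4 := congrArg (fun t => t * x) s3
  simp only [mul_add, add_mul, mul_sub, sub_mul, smul_mul_assoc, mul_smul_comm, smul_sub,
    mul_assoc, ← h13, h13'] at r1 r2 r3 r4 ⊢
  apply smul_right_injective A hq2
  simp only
  linear_combination (norm := skip) (q ^ 2) • (r1 - r4) - (r2 - r3)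
  match_scalars <;> field_simp <;> ring

include hq hq2 hc hs in
theorem commute_mid (a j m : ℕ) : Commute (f (a + j + 1)) (E q f a (j + m + 2)) := by
  have key : ∀ a m : ℕ, Commute (f (a + 1)) (E q f a (m + 2)) := by
    intro a m
    induction m with
    | zero => exact commute_mid_base hq hq2 hc hs a
    | succ m ih =>
      have h2 : Commute (f (a + 1)) (f (a + (m + 2) + 1)) := hc _ _ (by omega)
      exact (ih.mul_right h2).sub_right ((h2.mul_right ih).smul_right q)
  cases j with
  | zero => simpa using key a m
  | succ j =>
    have h1 := key (a + j + 1) m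
    have h2 : Commute (f (a + j + 1 + 1)) (E q f a j) := commute_far hc (Or.inl (by omega))
    have e := E_split hc a j (m + 2) (q := q)
    rw [show j + 1 + m + 2 = j + (m + 2) + 1 by omega, e]
    exact (h2.mul_right h1).sub_right ((h1.mul_right h2).smul_right q)

include hq hq2 hc hs in
theorem commute_inner {a k i : ℕ} (h1 : a < i) (h2 : i < a + k) : Commute (f i) (E q f a k) := by
  have := commute_mid hq hq2 hc hs a (i - a - 1) (k - (i - a - 1) - 2)
  rwa [show a + (i - a - 1) + 1 = i by omega,
    show i - a - 1 + (k - (i - a - 1) - 2) + 2 = k by omega] at this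

include hq hq2 hc hs in
/-- The straightening rule in the overlapping case `a < c ≤ b < d`. -/
theorem straight_overlap {a c k m : ℕ} (h1 : a < c) (h2 : c ≤ a + k) (h3 : a + k < c + m) :
    E q f a k * E q f c m = (1 : K) • (E q f c m * E q f a k) +
      (q⁻¹ - q) • (E q f a (c + m - a) * E q f c (a + k - c)) := by
  obtain ⟨j, rfl⟩ : ∃ j, c = a + j + 1 := ⟨c - a - 1, by omega⟩
  obtain ⟨u, rfl⟩ : ∃ u, k = j + u + 1 := ⟨k - j - 1, by omega⟩
  rw [show a + j + 1 + m - a = j + m + 1 by omega, show a + (j + u + 1) - (a + j + 1) = u by omega]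
  have e1 := E_split hc a j u (q := q)
  have e2 := E_split hc a j m (q := q)
  have hw : Commute (E q f a (j + m + 1)) (E q f (a + j + 1) u) :=
    commute_E u fun i hi hi' => (commute_inner hq hq2 hc hs (by omega) (by omega)).symm
  have hyz : E q f (a + j + 1) u * E q f (a + j + 1) m =
      q⁻¹ • (E q f (a + j + 1) m * E q f (a + j + 1) u) := by
    obtain ⟨m, rfl⟩ : ∃ m', m = m' + 1 := ⟨m - 1, by omega⟩
    exact qcomm_E_left (qcomm_first hq hc hs _ m) u
      fun i hi hi' => (commute_inner hq hq2 hc hs (by omega) (by omega)).symm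
  have hw' := hw.eq
  rw [e1]
  rw [e2] at hw' ⊢
  generalize E q f (a + j + 1) u = y at *
  generalize E q f (a + j + 1) m = z at *
  generalize E q f a j = x at *
  have hyz' : ∀ t, y * (z * t) = q⁻¹ • (z * (y * t)) := fun t => by
    rw [← mul_assoc, hyz, smul_mul_assoc, mul_assoc]
  simp only [mul_sub, sub_mul, smul_mul_assoc, mul_smul_comm, smul_sub,
    mul_assoc, hyz, hyz'] at hw' ⊢
  linear_combination (norm := skip) q • hw'
  match_scalars <;> field_simp <;> ring

include hq hq2 hc hs in
/-- The straightening rule for segments `[a,a+k] < [c,c+m]` that cannot be glued. -/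
theorem straight {a c k m : ℕ} (h : a < c ∨ a = c ∧ k < m) (hne : c ≠ a + k + 1) :
    ∃ s t : K, (t = 0 ∨ a < c ∧ c ≤ a + k ∧ a + k < c + m) ∧
    E q f a k * E q f c m = s • (E q f c m * E q f a k) +
      t • (E q f a (c + m - a) * E q f c (a + k - c)) := by
  rcases h with h | ⟨rfl, h⟩
  · by_cases h1 : c ≤ a + k
    · rcases lt_trichotomy (a + k) (c + m) with h2 | h2 | h2
      · exact ⟨1, q⁻¹ - q, Or.inr ⟨h, h1, h2⟩, straight_overlap hq hq2 hc hs h h1 h2⟩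
      -- common right end: all letters of `[c,c+m]` but the last one commute with `[a,a+k]`
      · refine ⟨q⁻¹, 0, Or.inl rfl, ?_⟩
        rw [zero_smul, add_zero]
        obtain ⟨k, rfl⟩ : ∃ k', k = k' + 1 := ⟨k - 1, by omega⟩
        have hl := qcomm_last hq hc hs a k
        cases m with
        | zero =>
          obtain rfl : c = a + k + 1 := by omega
          exact hl
        | succ m =>
          have hx : Commute (E q f a (k + 1)) (E q f c m) := commute_E m fun i hi hi' =>
            (commute_inner hq hq2 hc hs (by omega) (by omega)).symm
          have e : E q f c (m + 1) = E q f c m * f (a + k + 1) - q • (f (a + k + 1) * E q f c m) := by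
            rw [show a + k + 1 = c + m + 1 by omega]; rfl
          have hx := hx.eq
          rw [e]
          generalize E q f a (k + 1) = x at *
          generalize E q f c m = y at *
          generalize f (a + k + 1) = g at *
          have hx' : ∀ t, x * (y * t) = y * (x * t) := fun t => by
            rw [← mul_assoc, hx, mul_assoc]
          have hl' : ∀ t, x * (g * t) = q⁻¹ • (g * (x * t)) := fun t => by
            rw [← mul_assoc, hl, smul_mul_assoc, mul_assoc]
          simp only [mul_sub, sub_mul, smul_mul_assoc, mul_smul_comm, smul_sub,
            mul_assoc, hx, hx', hl, hl']
          rw [smul_comm]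
      · refine ⟨1, 0, Or.inl rfl, ?_⟩
        rw [zero_smul, add_zero, one_smul]
        exact commute_E m fun i hi hi' =>
          (commute_inner hq hq2 hc hs (by omega) (by omega)).symm
    · refine ⟨1, 0, Or.inl rfl, ?_⟩
      rw [zero_smul, add_zero, one_smul]
      exact commute_E m fun i hi hi' => (commute_far hc (Or.inl (by omega))).symm
  · refine ⟨q⁻¹, 0, Or.inl rfl, ?_⟩
    rw [zero_smul, add_zero]
    obtain ⟨m, rfl⟩ : ∃ m', m = m' + 1 := ⟨m - 1, by omega⟩
    exact qcomm_E_left (qcomm_first hq hc hs _ m) k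
      fun i hi hi' => (commute_inner hq hq2 hc hs (by omega) (by omega)).symm

end Serre

/-! ### The length filtration and its associated graded algebra -/

section Filtered

variable {K : Type*} [Field K] {U : Type*} [Ring U] [Algebra K U]

/-- The span of the monomials of degree at most `d` in the `f_i`. -/
def Fil (K : Type*) [Field K] {U : Type*} [Ring U] [Algebra K U] (f : ℕ → U) (d : ℕ) :
    Submodule K U :=
  Submodule.span K {x | ∃ w : List ℕ, w.length ≤ d ∧ x = (w.map f).prod}

/-- The preceding step of the filtration, zero in degree `0`. -/
def FilPred (K : Type*) [Field K] {U : Type*} [Ring U] [Algebra K U] (f : ℕ → U) :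
    ℕ → Submodule K U
  | 0 => ⊥
  | d + 1 => Fil K f d

theorem Fil_mono {f : ℕ → U} {d e : ℕ} (h : d ≤ e) : Fil K f d ≤ Fil K f e :=
  Submodule.span_mono fun _ ⟨w, hw, hx⟩ => ⟨w, hw.trans h, hx⟩

theorem mul_mem_Fil {f : ℕ → U} {d e : ℕ} {x y : U} (hx : x ∈ Fil K f d) (hy : y ∈ Fil K f e) :
    x * y ∈ Fil K f (d + e) := by
  have h : Fil K f d * Fil K f e ≤ Fil K f (d + e) := by
    rw [Fil, Fil, Submodule.span_mul_span, Submodule.span_le]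
    rintro _ ⟨_, ⟨w, hw, rfl⟩, _, ⟨v, hv, rfl⟩, rfl⟩
    exact Submodule.subset_span ⟨w ++ v, by simp; omega, by simp⟩
  exact h (Submodule.mul_mem_mul hx hy)

theorem mul_mem_FilPred {f : ℕ → U} {d e : ℕ} {x y : U} (hx : x ∈ FilPred K f d)
    (hy : y ∈ Fil K f e) : x * y ∈ FilPred K f (d + e) := by
  cases d with
  | zero =>
    have : x = 0 := by simpa [FilPred] using hx
    simp [this]
  | succ d =>
    rw [show d + 1 + e = d + e + 1 by omega]
    exact mul_mem_Fil (K := K) hx hy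

theorem mul_mem_FilPred' {f : ℕ → U} {d e : ℕ} {x y : U} (hx : x ∈ Fil K f d)
    (hy : y ∈ FilPred K f e) : x * y ∈ FilPred K f (d + e) := by
  cases e with
  | zero =>
    have : y = 0 := by simpa [FilPred] using hy
    simp [this]
  | succ e => exact mul_mem_Fil (K := K) hx hy

theorem one_mem_Fil {f : ℕ → U} (d : ℕ) : (1 : U) ∈ Fil K f d :=
  Submodule.subset_span ⟨[], by simp, by simp⟩

theorem gen_mem_Fil {f : ℕ → U} (i : ℕ) : f i ∈ Fil K f 1 :=
  Submodule.subset_span ⟨[i], by simp, by simp⟩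

theorem E_mem_Fil {q : K} {f : ℕ → U} {a : ℕ} : ∀ k : ℕ, E q f a k ∈ Fil K f (k + 1)
  | 0 => gen_mem_Fil a
  | k + 1 => by
    refine sub_mem (mul_mem_Fil (E_mem_Fil k) (gen_mem_Fil _)) (Submodule.smul_mem _ _ ?_)
    rw [show k + 1 + 1 = 1 + (k + 1) by omega]
    exact mul_mem_Fil (gen_mem_Fil _) (E_mem_Fil k)

open Polynomial in
/-- The Rees algebra of the length filtration. -/
def Rees (K : Type*) [Field K] {U : Type*} [Ring U] [Algebra K U] (f : ℕ → U) :
    Subalgebra K U[X] where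
  carrier := {p | ∀ k, p.coeff k ∈ Fil K f k}
  add_mem' hp hp' k := by rw [coeff_add]; exact add_mem (hp k) (hp' k)
  mul_mem' hp hp' k := by
    rw [coeff_mul]
    refine sum_mem fun x hx => ?_
    rw [← Finset.HasAntidiagonal.mem_antidiagonal.1 hx]
    exact mul_mem_Fil (hp _) (hp' _)
  algebraMap_mem' r k := by
    rw [Polynomial.algebraMap_apply, coeff_C]
    split_ifs with h
    · rw [Algebra.algebraMap_eq_smul_one]
      exact Submodule.smul_mem _ _ (one_mem_Fil _)
    · exact zero_mem _

/-- The congruence on the Rees algebra whose quotient is the associated graded algebra. -/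
def grCon (K : Type*) [Field K] {U : Type*} [Ring U] [Algebra K U] (f : ℕ → U) :
    RingCon (Rees K f) where
  r p p' := ∀ k, (p.1 - p'.1).coeff k ∈ FilPred K f k
  iseqv := by
    refine ⟨fun p k => by simp, fun {p p'} h k => ?_, fun {p p' p''} h h' k => ?_⟩
    · rw [← neg_sub, Polynomial.coeff_neg]; exact neg_mem (h k)
    · rw [← sub_add_sub_cancel p.1 p'.1 p''.1, Polynomial.coeff_add]
      exact add_mem (h k) (h' k)
  add' {p p' s s'} h h' k := by
    have : (p + s).1 - (p' + s').1 = (p.1 - p'.1) + (s.1 - s'.1) := by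
      push_cast; abel
    rw [this, Polynomial.coeff_add]
    exact add_mem (h k) (h' k)
  mul' {p p' s s'} h h' k := by
    have : (p * s).1 - (p' * s').1 = (p.1 - p'.1) * s.1 + p'.1 * (s.1 - s'.1) := by
      push_cast; noncomm_ring
    rw [this, Polynomial.coeff_add, Polynomial.coeff_mul, Polynomial.coeff_mul]
    refine add_mem (sum_mem fun x hx => ?_) (sum_mem fun x hx => ?_)
    · rw [← Finset.HasAntidiagonal.mem_antidiagonal.1 hx]
      exact mul_mem_FilPred (h _) (s.2 _)
    · rw [← Finset.HasAntidiagonal.mem_antidiagonal.1 hx]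
      exact mul_mem_FilPred' (p'.2 _) (h' _)

/-- The associated graded algebra of the length filtration. -/
abbrev Gr (K : Type*) [Field K] {U : Type*} [Ring U] [Algebra K U] (f : ℕ → U) : Type _ :=
  (grCon K f).Quotient

/-- The homogeneous element of degree `d` of the Rees algebra attached to an element of `Fil d`. -/
noncomputable def homog {f : ℕ → U} (d : ℕ) (x : U) (hx : x ∈ Fil K f d) : Rees K f :=
  ⟨Polynomial.monomial d x, fun k => by
    rw [Polynomial.coeff_monomial]
    split_ifs with h
    · exact h ▸ hx
    · exact zero_mem _⟩

/-- The symbol of degree `d` of an element of `Fil d`. -/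
noncomputable def symb {f : ℕ → U} (d : ℕ) (x : U) (hx : x ∈ Fil K f d) : Gr K f :=
  ((homog d x hx : Rees K f) : (grCon K f).Quotient)

theorem symb_mul {f : ℕ → U} {d e : ℕ} {x y : U} (hx : x ∈ Fil K f d) (hy : y ∈ Fil K f e) :
    symb d x hx * symb e y hy = symb (d + e) (x * y) (mul_mem_Fil hx hy) := by
  rw [symb, symb, ← RingCon.coe_mul]
  congr 1
  exact Subtype.ext (Polynomial.monomial_mul_monomial _ _ _ _)

theorem symb_add {f : ℕ → U} {d : ℕ} {x y : U} (hx : x ∈ Fil K f d) (hy : y ∈ Fil K f d) :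
    symb d x hx + symb d y hy = symb d (x + y) (add_mem hx hy) := by
  rw [symb, symb, ← RingCon.coe_add]
  congr 1
  exact Subtype.ext ((Polynomial.monomial d).map_add x y).symm

theorem symb_sub {f : ℕ → U} {d : ℕ} {x y : U} (hx : x ∈ Fil K f d) (hy : y ∈ Fil K f d) :
    symb d x hx - symb d y hy = symb d (x - y) (sub_mem hx hy) := by
  rw [symb, symb, ← RingCon.coe_sub]
  congr 1
  exact Subtype.ext (Polynomial.monomial_sub _).symm

theorem symb_smul {f : ℕ → U} {d : ℕ} {x : U} (c : K) (hx : x ∈ Fil K f d) :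
    c • symb d x hx = symb d (c • x) (Submodule.smul_mem _ _ hx) := by
  rw [symb, ← RingCon.coe_smul]
  congr 1
  exact Subtype.ext (Polynomial.smul_monomial _ _ _)

theorem symb_eq_iff {f : ℕ → U} {d : ℕ} {x y : U} (hx : x ∈ Fil K f d) (hy : y ∈ Fil K f d) :
    symb d x hx = symb d y hy ↔ x - y ∈ FilPred K f d := by
  rw [symb, symb, RingCon.eq]
  change (∀ k, (Polynomial.monomial d x - Polynomial.monomial d y).coeff k ∈ FilPred K f k) ↔ _
  constructor
  · intro h
    simpa using h d
  · intro h k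
    rw [← Polynomial.monomial_sub, Polynomial.coeff_monomial]
    split_ifs with hk
    · exact hk ▸ h
    · exact zero_mem _

theorem symb_congr {f : ℕ → U} {d e : ℕ} {x y : U} (hx : x ∈ Fil K f d) (hy : y ∈ Fil K f e)
    (hd : d = e) (h : x = y) : symb d x hx = symb e y hy := by
  subst hd h; rfl

theorem E_symb {q : K} {f : ℕ → U} {a : ℕ} : ∀ k : ℕ,
    E q (fun i => symb 1 (f i) (gen_mem_Fil (K := K) i)) a k = symb (k + 1) (E q f a k) (E_mem_Fil k)
  | 0 => rfl
  | k + 1 => by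
    rw [E, E_symb k, symb_mul, symb_mul, symb_smul,
      symb_congr (d := 1 + (k + 1)) (e := k + 1 + 1) _ _ (by omega) rfl, symb_sub]
    · rfl
    · rw [show k + 1 + 1 = 1 + (k + 1) by omega]
      exact Submodule.smul_mem _ _ (mul_mem_Fil (gen_mem_Fil _) (E_mem_Fil k))

/-- The straightening rules hold in the filtered algebra up to terms of smaller degree: they hold
in the associated graded algebra, where the lower order terms `ξ i j • f j` of the Serre relations
disappear. -/
theorem straight_filtered {q : K} {f : ℕ → U} (hq : q ≠ 0) (hq2 : q + q⁻¹ ≠ 0)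
    (hc : ∀ i j, i + 1 < j → f i * f j = f j * f i) {ξ : ℕ → ℕ → K}
    (hs : ∀ i j, (i + 1 = j ∨ j + 1 = i) →
      f i * f i * f j + f j * f i * f i = (q + q⁻¹) • (f i * f j * f i) + ξ i j • f j)
    {a c k m : ℕ} (h : a < c ∨ a = c ∧ k < m) (hne : c ≠ a + k + 1) :
    ∃ s t : K, (t = 0 ∨ a < c ∧ c ≤ a + k ∧ a + k < c + m) ∧
    E q f a k * E q f c m - (s • (E q f c m * E q f a k) +
      t • (E q f a (c + m - a) * E q f c (a + k - c))) ∈ Fil K f (k + m + 1) := by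
  have hc' : ∀ i j, i + 1 < j → symb 1 (f i) (gen_mem_Fil (K := K) i) *
      symb 1 (f j) (gen_mem_Fil (K := K) j) =
      symb 1 (f j) (gen_mem_Fil (K := K) j) * symb 1 (f i) (gen_mem_Fil (K := K) i) := by
    intro i j hij
    simp only [symb_mul]
    exact symb_congr _ _ rfl (hc i j hij)
  obtain ⟨s, t, hst, he⟩ := straight (A := Gr K f)
    (f := fun i => symb 1 (f i) (gen_mem_Fil (K := K) i)) hq hq2 hc' (by
      intro i j hij
      simp only [symb_mul]
      rw [symb_add, symb_smul, symb_eq_iff, hs i j hij, add_sub_cancel_left]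
      exact Fil_mono (d := 1) (e := 2) (by omega)
        (Submodule.smul_mem _ _ (gen_mem_Fil j))) h hne
  refine ⟨s, t, hst, ?_⟩
  have h1 : E q f a k * E q f c m ∈ Fil K f (k + m + 2) := by
    rw [show k + m + 2 = k + 1 + (m + 1) by omega]
    exact mul_mem_Fil (E_mem_Fil k) (E_mem_Fil m)
  have h2 : E q f c m * E q f a k ∈ Fil K f (k + m + 2) := by
    rw [show k + m + 2 = m + 1 + (k + 1) by omega]
    exact mul_mem_Fil (E_mem_Fil m) (E_mem_Fil k)
  have h3 : t • (E q f a (c + m - a) * E q f c (a + k - c)) ∈ Fil K f (k + m + 2) := by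
    rcases hst with rfl | h4
    · rw [zero_smul]; exact zero_mem _
    · rw [show k + m + 2 = (c + m - a + 1) + (a + k - c + 1) by omega]
      exact Submodule.smul_mem _ _ (mul_mem_Fil (E_mem_Fil _) (E_mem_Fil _))
  refine (symb_eq_iff (d := k + m + 2) h1 (add_mem (Submodule.smul_mem _ s h2) h3)).1 ?_
  rw [← symb_add (Submodule.smul_mem _ s h2) h3, ← symb_smul s h2]
  simp only [E_symb, symb_mul] at he
  rw [symb_congr (e := k + m + 2) _ h1 (by omega) rfl,
    symb_congr (d := m + 1 + (k + 1)) (e := k + m + 2) _ h2 (by omega) rfl] at he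
  rw [he]
  congr 1
  rcases hst with rfl | h4
  · have : symb (K := K) (f := f) (k + m + 2) 0 (zero_mem _) =
        (0 : K) • symb (f := f) (k + m + 2) 0 (zero_mem _) := by
      rw [symb_smul]; exact symb_congr _ _ rfl (by simp)
    rw [zero_smul] at this ⊢
    rw [← this]
    exact symb_congr _ _ rfl (by simp)
  · rw [symb_smul]
    exact symb_congr _ _ (by omega) rfl

end Filtered

/-! ### Ordered products of root vectors span -/

section Span

/-- The lexicographic order on segments, a segment `[a,a+k]` being encoded as `(a, k)`. -/
def plt (p p' : ℕ × ℕ) : Prop := p.1 < p'.1 ∨ p.1 = p'.1 ∧ p.2 < p'.2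

/-- The total length of a list of segments. -/
def size (P : List (ℕ × ℕ)) : ℕ := (P.map fun p => p.2 + 1).sum

theorem size_append (P Q : List (ℕ × ℕ)) : size (P ++ Q) = size P + size Q := by simp [size]

theorem size_cons (p : ℕ × ℕ) (Q : List (ℕ × ℕ)) : size (p :: Q) = p.2 + 1 + size Q := by
  simp [size]

theorem length_le_size : ∀ P : List (ℕ × ℕ), P.length ≤ size P
  | [] => Nat.zero_le _
  | p :: P => by
    have := length_le_size P
    rw [size_cons, List.length_cons]
    omega

theorem key_lt (A : List (ℕ × ℕ)) {p x : ℕ × ℕ} (h : plt p x) (B C : List (ℕ × ℕ)) :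
    (A ++ p :: B).map toLex < (A ++ x :: C).map toLex := by
  induction A with
  | nil =>
    simp only [List.nil_append, List.map_cons, List.cons_lt_cons_iff]
    exact Or.inl (Prod.Lex.toLex_lt_toLex.2 h)
  | cons y A ih =>
    simp only [List.cons_append, List.map_cons, List.cons_lt_cons_iff]
    exact Or.inr ⟨trivial, ih⟩

variable {K : Type*} [Field K] {U : Type*} [Ring U] [Algebra K U]

/-- The product of the root vectors of a list of segments. -/
def prodE (q : K) (f : ℕ → U) (P : List (ℕ × ℕ)) : U := (P.map fun p => E q f p.1 p.2).prod

theorem prodE_append (q : K) (f : ℕ → U) (P Q : List (ℕ × ℕ)) :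
    prodE q f (P ++ Q) = prodE q f P * prodE q f Q := by simp [prodE]

theorem prodE_cons (q : K) (f : ℕ → U) (p : ℕ × ℕ) (Q : List (ℕ × ℕ)) :
    prodE q f (p :: Q) = E q f p.1 p.2 * prodE q f Q := by simp [prodE]

theorem prodE_mem_Fil (q : K) (f : ℕ → U) : ∀ P : List (ℕ × ℕ), prodE q f P ∈ Fil K f (size P)
  | [] => one_mem_Fil _
  | p :: P => by
    rw [prodE_cons, size_cons]
    exact mul_mem_Fil (E_mem_Fil _) (prodE_mem_Fil q f P)

theorem E_eq_zero {q : K} {f : ℕ → U} {n : ℕ} (hn : ∀ i, n ≤ i → f i = 0) {a : ℕ} :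
    ∀ k : ℕ, n ≤ a + k → E q f a k = 0
  | 0, h => hn a h
  | k + 1, h => by simp [E, hn (a + k + 1) h]

theorem prodE_eq_zero {q : K} {f : ℕ → U} {n : ℕ} (hn : ∀ i, n ≤ i → f i = 0)
    {P : List (ℕ × ℕ)} {p : ℕ × ℕ} (hp : p ∈ P) (h : n ≤ p.1 + p.2) : prodE q f P = 0 :=
  List.prod_eq_zero (List.mem_map.2 ⟨p, hp, E_eq_zero hn _ h⟩)

theorem finite_segs (n d : ℕ) :
    {P : List (ℕ × ℕ) | P.length ≤ d ∧ ∀ p ∈ P, p.1 + p.2 < n}.Finite := by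
  refine ((List.finite_length_le (Fin n × Fin n) d).image
    (List.map fun p => ((p.1 : ℕ), (p.2 : ℕ)))).subset ?_
  rintro P ⟨hl, hP⟩
  refine ⟨P.attach.map fun p => (⟨p.1.1, by have := hP _ p.2; omega⟩,
    ⟨p.1.2, by have := hP _ p.2; omega⟩), by simpa using hl, ?_⟩
  rw [List.map_map]
  exact List.attach_map_subtype_val P

/-- Ordered products of root vectors span. A product that is not ordered is rewritten, modulo
products of smaller degree, into products which are larger for the lexicographic order on lists of
segments; there are only finitely many such lists in each degree. -/
theorem span_sorted {q : K} {f : ℕ → U} (hq : q ≠ 0) (hq2 : q + q⁻¹ ≠ 0)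
    (hc : ∀ i j, i + 1 < j → f i * f j = f j * f i) {ξ : ℕ → ℕ → K}
    (hs : ∀ i j, (i + 1 = j ∨ j + 1 = i) →
      f i * f i * f j + f j * f i * f i = (q + q⁻¹) • (f i * f j * f i) + ξ i j • f j)
    {n : ℕ} (hn : ∀ i, n ≤ i → f i = 0) (P : List (ℕ × ℕ)) :
    prodE q f P ∈ Submodule.span K
      {x | ∃ P : List (ℕ × ℕ), P.IsChain (fun p p' => ¬ plt p p') ∧ x = prodE q f P} := by
  set S := Submodule.span K
      {x | ∃ P : List (ℕ × ℕ), P.IsChain (fun p p' => ¬ plt p p') ∧ x = prodE q f P} with hS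
  suffices H : ∀ d, ∀ P, size P = d → prodE q f P ∈ S from H _ P rfl
  clear P
  intro d
  induction d using Nat.strong_induction_on with
  | _ d IH =>
  have hlow : ∀ e, e < d → Fil K f e ≤ S := by
    intro e he
    refine Submodule.span_le.2 ?_
    rintro _ ⟨w, hw, rfl⟩
    have h1 : size (w.map fun i => (i, 0)) = w.length := by simp [size, Function.comp_def]
    have h2 : prodE q f (w.map fun i => (i, 0)) = (w.map f).prod := by
      simp [prodE, Function.comp_def, E]
    rw [← h2]
    exact IH _ (by omega) _ h1
  by_contra! hbad
  set B : Set (List (ℕ × ℕ)) := {P | size P = d ∧ prodE q f P ∉ S} with hB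
  have hfin : B.Finite := by
    refine (finite_segs n d).subset ?_
    rintro P ⟨hP, hP'⟩
    refine ⟨hP ▸ length_le_size P, fun p hp => ?_⟩
    by_contra! h
    exact hP' (prodE_eq_zero (q := q) hn hp h ▸ zero_mem _)
  obtain ⟨P, ⟨hP, hPS⟩, hmax⟩ := Set.exists_max_image B (fun P => P.map toLex) hfin hbad
  have hup : ∀ Q, size Q = d → P.map toLex < Q.map toLex → prodE q f Q ∈ S := by
    intro Q hQ hlt
    by_contra h
    exact absurd (hmax Q ⟨hQ, h⟩) (not_le.2 hlt)
  have hnc : ¬ P.IsChain (fun p p' => ¬ plt p p') := fun h =>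
    hPS (Submodule.subset_span ⟨P, h, rfl⟩)
  rw [List.isChain_iff_forall_rel_of_append_cons_cons] at hnc
  push Not at hnc
  obtain ⟨⟨a, k⟩, ⟨c, m⟩, A, C, rfl, hlt⟩ := hnc
  refine hPS ?_
  have hsz : size A + (k + 1 + (m + 1 + size C)) = d := by
    rw [← hP, size_append, size_cons, size_cons]
  have hswap : prodE q f (A ++ (c, m) :: (a, k) :: C) ∈ S :=
    hup _ (by rw [size_append, size_cons, size_cons]; omega) (key_lt A hlt _ _)
  simp only [prodE_append, prodE_cons] at hswap ⊢
  by_cases hne : c = a + k + 1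
  -- adjacent segments are glued, at the cost of the product in the other order
  · subst hne
    have hlt' : plt (a, k) (a, k + m + 1) := Or.inr ⟨rfl, by show k < k + m + 1; omega⟩
    have hglue : prodE q f (A ++ (a, k + m + 1) :: C) ∈ S :=
      hup _ (by rw [size_append, size_cons]; omega) (key_lt A hlt' _ _)
    simp only [prodE_append, prodE_cons] at hglue
    rw [E_split hc a k m] at hglue
    have := add_mem hglue (Submodule.smul_mem _ q hswap)
    convert this using 1
    simp only [sub_mul, mul_sub, smul_mul_assoc, mul_smul_comm, mul_assoc]
    abel
  · obtain ⟨s, t, hst, he⟩ := straight_filtered hq hq2 hc hs hlt hne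
    have hover : t • (prodE q f A * (E q f a (c + m - a) * (E q f c (a + k - c) * prodE q f C))) ∈
        S := by
      rcases hst with rfl | ⟨h1, h2, h3⟩
      · rw [zero_smul]; exact zero_mem _
      · have hlt' : plt (a, k) (a, c + m - a) := Or.inr ⟨rfl, by show k < c + m - a; omega⟩
        have := hup (A ++ (a, c + m - a) :: (c, a + k - c) :: C)
          (by rw [size_append, size_cons, size_cons]; omega)
          (key_lt A hlt' _ _)
        simp only [prodE_append, prodE_cons] at this
        exact Submodule.smul_mem _ t this
    have hlo := hlow _ (by omega : size A + (k + m + 1 + size C) < d)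
      (mul_mem_Fil (prodE_mem_Fil q f A) (mul_mem_Fil he (prodE_mem_Fil q f C)))
    have := add_mem hlo (add_mem (Submodule.smul_mem _ s hswap) hover)
    convert this using 1
    simp only [sub_mul, mul_sub, add_mul, mul_add, smul_mul_assoc, mul_smul_comm, mul_assoc]
    abel

end Span

/-! ### The `q`-shuffle model -/

section Shuffle

variable {K : Type*} [Field K]

/-- The weight `q^{-(α_i, α_j)}`, for `(α_i, α_j)` the Cartan matrix of type `A`. -/
def wt (q : K) (i j : ℕ) : K :=
  if i = j then q⁻¹ * q⁻¹ else if i + 1 = j ∨ j + 1 = i then q else 1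

/-- The weight of a letter `k` against a word `l`. -/
def wtl (q : K) (l : List ℕ) (k : ℕ) : K := (l.map fun i => wt q i k).prod

/-- The coefficient of the word `w` in the `q`-shuffle product of the word `l` with the
(possibly infinite) linear combination of words `φ`. -/
def Sh (q : K) : List ℕ → List ℕ → (List ℕ → K) → K
  | [], l, φ => if l = [] then φ [] else 0
  | k :: w, [], φ => Sh q w [] (fun v => φ (k :: v))
  | k :: w, j :: l, φ => wtl q (j :: l) k * Sh q w (j :: l) (fun v => φ (k :: v)) +
      if j = k then Sh q w l φ else 0

theorem Sh_add (q : K) : ∀ (w l : List ℕ) (φ ψ : List ℕ → K),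
    Sh q w l (φ + ψ) = Sh q w l φ + Sh q w l ψ
  | [], l, φ, ψ => by simp only [Sh]; split_ifs <;> simp
  | k :: w, [], φ, ψ => Sh_add q w [] (fun v => φ (k :: v)) (fun v => ψ (k :: v))
  | k :: w, j :: l, φ, ψ => by
    have h := Sh_add q w (j :: l) (fun v => φ (k :: v)) (fun v => ψ (k :: v))
    have h' := Sh_add q w l φ ψ
    simp only [Sh]
    rw [h', show (fun v => (φ + ψ) (k :: v)) = (fun v => φ (k :: v)) + fun v => ψ (k :: v) from rfl, h]
    split_ifs <;> ring

theorem Sh_smul (q : K) : ∀ (w l : List ℕ) (c : K) (φ : List ℕ → K),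
    Sh q w l (c • φ) = c * Sh q w l φ
  | [], l, c, φ => by simp only [Sh]; split_ifs <;> simp
  | k :: w, [], c, φ => Sh_smul q w [] c (fun v => φ (k :: v))
  | k :: w, j :: l, c, φ => by
    have h := Sh_smul q w (j :: l) c (fun v => φ (k :: v))
    have h' := Sh_smul q w l c φ
    simp only [Sh]
    rw [h', show (fun v => (c • φ) (k :: v)) = c • (fun v => φ (k :: v)) from rfl, h]
    split_ifs <;> ring

/-- Left `q`-shuffle multiplication by the word `l`. -/
def S (q : K) (l : List ℕ) : Module.End K (List ℕ → K) where
  toFun φ w := Sh q w l φ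
  map_add' φ ψ := funext fun w => Sh_add q w l φ ψ
  map_smul' c φ := funext fun w => Sh_smul q w l c φ

/-- Deletion of the first letter `k`. -/
def del (K : Type*) [Field K] (k : ℕ) : Module.End K (List ℕ → K) where
  toFun φ w := φ (k :: w)
  map_add' _ _ := rfl
  map_smul' _ _ := rfl

theorem word_ext {φ ψ : List ℕ → K} (h0 : φ [] = ψ []) (h : ∀ k, del K k φ = del K k ψ) :
    φ = ψ := by
  funext w
  cases w with
  | nil => exact h0
  | cons k w => exact congrFun (h k) w

/-- An operator that skew-commutes with all deletions and has no constant term vanishes. -/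
theorem eq_zero_of_skew (D : Module.End K (List ℕ → K)) (h0 : ∀ φ, D φ [] = 0)
    (h : ∀ k, ∃ c : K, ∀ φ, del K k (D φ) = c • D (del K k φ)) (φ : List ℕ → K) : D φ = 0 := by
  funext w
  induction w generalizing φ with
  | nil => exact h0 φ
  | cons k w ih =>
    obtain ⟨c, hc⟩ := h k
    have := congrFun (hc φ) w
    change D φ (k :: w) = c * D (del K k φ) w at this
    rw [this, ih]
    simp

theorem S_nil (q : K) (φ : List ℕ → K) : S q [] φ = φ := by
  funext w
  induction w generalizing φ with
  | nil => rfl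
  | cons k w ih => exact ih (del K k φ)

theorem S_cons_nil (q : K) (j : ℕ) (l : List ℕ) (φ : List ℕ → K) : S q (j :: l) φ [] = 0 := rfl

theorem del_S (q : K) (k j : ℕ) (l : List ℕ) (φ : List ℕ → K) :
    del K k (S q (j :: l) φ) =
      wtl q (j :: l) k • S q (j :: l) (del K k φ) + if j = k then S q l φ else 0 := by
  funext w
  change wtl q (j :: l) k * Sh q w (j :: l) (fun v => φ (k :: v)) +
    (if j = k then Sh q w l φ else 0) = _
  split_ifs <;> rfl

theorem del_S_single (q : K) (k j : ℕ) (φ : List ℕ → K) :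
    del K k (S q [j] φ) = wt q j k • S q [j] (del K k φ) + if j = k then φ else 0 := by
  rw [del_S, S_nil]
  simp [wtl]

theorem wt_self (q : K) (i : ℕ) : wt q i i = q⁻¹ * q⁻¹ := by simp [wt]

theorem wt_adj (q : K) {i j : ℕ} (h : i + 1 = j ∨ j + 1 = i) : wt q i j = q := by
  rw [wt, if_neg (by omega), if_pos h]

theorem wt_far (q : K) {i j : ℕ} (h : i + 1 < j ∨ j + 1 < i) : wt q i j = 1 := by
  rw [wt, if_neg (by omega), if_neg (by omega)]

theorem shuffle_comm (q : K) {i j : ℕ} (h : i + 1 < j) (φ : List ℕ → K) :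
    S q [i] (S q [j] φ) = S q [j] (S q [i] φ) := by
  have := eq_zero_of_skew (S q [i] * S q [j] - S q [j] * S q [i])
    (fun φ => by simp [S_cons_nil]) (fun k => ⟨wt q i k * wt q j k, fun φ => ?_⟩) φ
  · exact sub_eq_zero.1 this
  · simp only [LinearMap.sub_apply, Module.End.mul_apply, map_sub, del_S_single, map_add, map_smul]
    rcases eq_or_ne i k with rfl | hi
    · simp only [if_neg (by omega : ¬ j = i), if_true, wt_far q (Or.inr h), map_zero]
      module
    · rcases eq_or_ne j k with rfl | hj
      · simp only [if_neg hi, if_true, wt_far q (Or.inl h), map_zero]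
        module
      · simp only [if_neg hi, if_neg hj, map_zero]
        module

theorem shuffle_serre {q : K} (hq : q ≠ 0) {i j : ℕ} (h : i + 1 = j ∨ j + 1 = i)
    (φ : List ℕ → K) :
    S q [i] (S q [i] (S q [j] φ)) + S q [j] (S q [i] (S q [i] φ)) =
      (q + q⁻¹) • S q [i] (S q [j] (S q [i] φ)) := by
  have := eq_zero_of_skew (S q [i] * S q [i] * S q [j] + S q [j] * S q [i] * S q [i] -
    (q + q⁻¹) • (S q [i] * S q [j] * S q [i]))
    (fun φ => by simp [S_cons_nil]) (fun k => ⟨wt q i k * wt q i k * wt q j k, fun φ => ?_⟩) φ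
  · exact sub_eq_zero.1 this
  · simp only [LinearMap.sub_apply, LinearMap.add_apply, LinearMap.smul_apply,
      Module.End.mul_apply, map_sub, del_S_single, map_add, map_smul]
    rcases eq_or_ne i k with rfl | hi
    · simp only [if_neg (by omega : ¬ j = i), if_true, wt_self, wt_adj q h.symm, map_zero]
      match_scalars <;> field_simp <;> ring
    · rcases eq_or_ne j k with rfl | hj
      · simp only [if_neg hi, if_true, wt_self, wt_adj q h, map_zero]
        match_scalars <;> field_simp <;> ring
      · simp only [if_neg hi, if_neg hj, map_zero]
        module

/-- The empty word. -/
def emptyWord (K : Type*) [Field K] : List ℕ → K := fun w => if w = [] then 1 else 0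

theorem del_emptyWord (k : ℕ) : del K k (emptyWord K) = 0 := by
  funext w; simp [del, emptyWord]

/-- The subalgebra of the `q`-shuffle algebra generated by the letters. -/
def M (q : K) : Submodule K (List ℕ → K) :=
  Submodule.span K (Set.range fun w : List ℕ => ((w.map fun i => S q [i]).prod) (emptyWord K))

theorem emptyWord_mem (q : K) : emptyWord K ∈ M q := Submodule.subset_span ⟨[], rfl⟩

theorem M_induction {q : K} {p : (List ℕ → K) → Prop} (h1 : p (emptyWord K))
    (h0 : p 0) (hadd : ∀ x y, p x → p y → p (x + y)) (hsmul : ∀ (c : K) x, p x → p (c • x))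
    (hS : ∀ i, ∀ x ∈ M q, p x → p (S q [i] x)) {x : List ℕ → K} (hx : x ∈ M q) : p x := by
  refine Submodule.span_induction ?_ h0 (fun x y _ _ => hadd x y) (fun c x _ => hsmul c x) hx
  rintro _ ⟨w, rfl⟩
  induction w with
  | nil => exact h1
  | cons i w ih => exact hS i _ (Submodule.subset_span ⟨w, rfl⟩) ih

theorem S_mem {q : K} (i : ℕ) {x : List ℕ → K} (hx : x ∈ M q) : S q [i] x ∈ M q := by
  have : M q ≤ (M q).comap (S q [i]) := by
    refine Submodule.span_le.2 ?_
    rintro _ ⟨w, rfl⟩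
    exact Submodule.subset_span ⟨i :: w, by simp⟩
  exact this hx

theorem del_mem {q : K} (k : ℕ) {x : List ℕ → K} (hx : x ∈ M q) : del K k x ∈ M q := by
  refine M_induction (q := q) (p := fun x => del K k x ∈ M q) ?_ ?_ ?_ ?_ ?_ hx
  · rw [del_emptyWord]; exact zero_mem _
  · rw [map_zero]; exact zero_mem _
  · intro x y h h'; rw [map_add]; exact add_mem h h'
  · intro c x h; rw [map_smul]; exact Submodule.smul_mem _ _ h
  · intro i x hx h
    rw [del_S_single]
    refine add_mem (Submodule.smul_mem _ _ (S_mem i h)) ?_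
    split_ifs
    · exact hx
    · exact zero_mem _

/-- An operator that kills the empty word and skew-commutes with letter multiplications kills
the subalgebra generated by the letters. -/
theorem kill_M {q : K} (D : Module.End K (List ℕ → K)) (h0 : D (emptyWord K) = 0)
    (h : ∀ k, ∃ c : K, ∀ φ, D (S q [k] φ) = c • S q [k] (D φ)) {x : List ℕ → K} (hx : x ∈ M q) :
    D x = 0 := by
  refine M_induction (q := q) (p := fun x => D x = 0) h0 (map_zero _) ?_ ?_ ?_ hx
  · intro x y h h'; rw [map_add, h, h', add_zero]
  · intro c x h; rw [map_smul, h, smul_zero]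
  · intro i x _ hi
    obtain ⟨c, hc⟩ := h i
    rw [hc, hi, map_zero, smul_zero]

theorem del_comm (q : K) {i j : ℕ} (h : i + 1 < j) {x : List ℕ → K} (hx : x ∈ M q) :
    del K i (del K j x) = del K j (del K i x) := by
  have := kill_M (q := q) (del K i * del K j - del K j * del K i)
    (by simp [del_emptyWord]) (fun k => ⟨wt q k i * wt q k j, fun φ => ?_⟩) hx
  · exact sub_eq_zero.1 this
  · simp only [LinearMap.sub_apply, Module.End.mul_apply, map_sub, del_S_single, map_add, map_smul]
    rcases eq_or_ne k i with rfl | hi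
    · simp only [if_neg (by omega : ¬ k = j), if_true, wt_far q (Or.inl h), map_zero]
      module
    · rcases eq_or_ne k j with rfl | hj
      · simp only [if_neg hi, if_true, wt_far q (Or.inr h), map_zero]
        module
      · simp only [if_neg hi, if_neg hj, map_zero]
        module

theorem del_serre {q : K} (hq : q ≠ 0) {i j : ℕ} (h : i + 1 = j ∨ j + 1 = i)
    {x : List ℕ → K} (hx : x ∈ M q) :
    del K i (del K i (del K j x)) + del K j (del K i (del K i x)) =
      (q + q⁻¹) • del K i (del K j (del K i x)) := by
  have := kill_M (q := q) (del K i * del K i * del K j + del K j * del K i * del K i -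
    (q + q⁻¹) • (del K i * del K j * del K i))
    (by simp [del_emptyWord]) (fun k => ⟨wt q k i * wt q k i * wt q k j, fun φ => ?_⟩) hx
  · exact sub_eq_zero.1 this
  · simp only [LinearMap.sub_apply, LinearMap.add_apply, LinearMap.smul_apply,
      Module.End.mul_apply, map_sub, del_S_single, map_add, map_smul]
    rcases eq_or_ne k i with rfl | hi
    · simp only [if_neg (by omega : ¬ k = j), if_true, wt_self, wt_adj q h, map_zero]
      match_scalars <;> field_simp <;> ring
    · rcases eq_or_ne k j with rfl | hj
      · simp only [if_neg hi, if_true, wt_self, wt_adj q h.symm, map_zero]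
        match_scalars <;> field_simp <;> ring
      · simp only [if_neg hi, if_neg hj, map_zero]
        module

/-- The operator by which the generator `B_i` acts. The coefficient `(1 - q²)⁻¹` is the one for
which the inhomogeneous term of the Serre relation is exactly `B_j`. -/
def Bop (q : K) (i : ℕ) : Module.End K (List ℕ → K) := S q [i] + (1 - q ^ 2)⁻¹ • del K i

theorem Bop_apply (q : K) (i : ℕ) (x : List ℕ → K) :
    Bop q i x = S q [i] x + (1 - q ^ 2)⁻¹ • del K i x := rfl

theorem Bop_mem {q : K} (i : ℕ) {x : List ℕ → K} (hx : x ∈ M q) : Bop q i x ∈ M q :=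
  add_mem (S_mem i hx) (Submodule.smul_mem _ _ (del_mem i hx))

theorem Bop_comm (q : K) {i j : ℕ} (h : i + 1 < j) {x : List ℕ → K} (hx : x ∈ M q) :
    Bop q i (Bop q j x) = Bop q j (Bop q i x) := by
  have h1 := shuffle_comm q h x
  have h2 := del_comm q h hx
  simp only [Bop_apply, map_add, map_smul, del_S_single, if_neg (by omega : ¬ i = j),
    if_neg (by omega : ¬ j = i), wt_far q (Or.inl h), wt_far q (Or.inr h), h1, h2]
  module

theorem Bop_serre {q : K} (hq : q ≠ 0) (hq1 : 1 - q ^ 2 ≠ 0) {i j : ℕ}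
    (h : i + 1 = j ∨ j + 1 = i) {x : List ℕ → K} (hx : x ∈ M q) :
    Bop q i (Bop q i (Bop q j x)) + Bop q j (Bop q i (Bop q i x)) =
      (q + q⁻¹) • Bop q i (Bop q j (Bop q i x)) + Bop q j x := by
  have h1 := shuffle_serre hq h x
  have h2 := del_serre hq h hx
  simp only [Bop_apply, map_add, map_smul, del_S_single, if_neg (by omega : ¬ i = j),
    if_neg (by omega : ¬ j = i), wt_adj q h, wt_adj q h.symm, wt_self, if_true, map_zero]
  linear_combination (norm := skip) h1 + ((1 - q ^ 2)⁻¹) ^ 3 • h2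
  match_scalars <;> field_simp <;> ring

end Shuffle

/-! ### Leading terms of products of root vectors -/

section Lead

variable {K : Type*} [Field K]

theorem S_dep (q : K) : ∀ (w l : List ℕ) (φ : List ℕ → K),
    (∀ v : List ℕ, v.length + l.length = w.length → φ v = 0) → S q l φ w = 0
  | [], [], φ, h => h [] rfl
  | [], j :: l, φ, _ => rfl
  | k :: w, [], φ, h => S_dep q w [] (del K k φ) fun v hv => h (k :: v) (by simpa using hv)
  | k :: w, j :: l, φ, h => by
    have h1 := S_dep q w (j :: l) (del K k φ) fun v hv => h (k :: v) (by simp at hv ⊢; omega)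
    have h2 := S_dep q w l φ fun v hv => h v (by simp at hv ⊢; omega)
    change del K k (S q (j :: l) φ) w = 0
    rw [del_S]
    split_ifs
    · simp [h1, h2]
    · simp [h1]

theorem S_congr (q : K) {w l : List ℕ} {φ ψ : List ℕ → K}
    (h : ∀ v : List ℕ, v.length + l.length = w.length → φ v = ψ v) :
    S q l φ w = S q l ψ w := by
  have := S_dep q w l (φ - ψ) fun v hv => sub_eq_zero.2 (h v hv)
  rw [map_sub] at this
  exact sub_eq_zero.1 this

/-- `φ` is supported on words of length at most `d`. -/
def DegLe (d : ℕ) (φ : List ℕ → K) : Prop := ∀ w : List ℕ, d < w.length → φ w = 0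

/-- The operator `X` is `c` times the `q`-shuffle multiplication by `l`, up to terms which raise
the degree by less than the length of `l`. -/
def Lead (q : K) (X : Module.End K (List ℕ → K)) (c : K) (l : List ℕ) : Prop :=
  ∀ d φ, DegLe d φ → ∀ w : List ℕ, d + l.length ≤ w.length → X φ w = c * S q l φ w

theorem Lead.degLe {q : K} {X : Module.End K (List ℕ → K)} {c : K} {l : List ℕ}
    (h : Lead q X c l) {d : ℕ} {φ : List ℕ → K} (hφ : DegLe d φ) : DegLe (d + l.length) (X φ) := by
  intro w hw
  rw [h d φ hφ w hw.le, S_dep, mul_zero]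
  intro v hv
  exact hφ v (by omega)

theorem Lead.comp {q : K} {X Y : Module.End K (List ℕ → K)} {c c' : K} {l l' : List ℕ}
    (hX : Lead q X c l) (hY : Lead q Y c' l') {d : ℕ} {φ : List ℕ → K} (hφ : DegLe d φ)
    {w : List ℕ} (hw : d + l'.length + l.length ≤ w.length) :
    X (Y φ) w = c * (c' * S q l (S q l' φ) w) := by
  rw [hX _ _ (hY.degLe hφ) w hw]
  congr 1
  rw [S_congr q (ψ := c' • S q l' φ), map_smul]
  · rfl
  · intro v hv
    rw [hY d φ hφ v (by omega)]
    rfl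

theorem lead_Bop (q : K) (i : ℕ) : Lead q (Bop q i) 1 [i] := by
  intro d φ hφ w hw
  have : φ (i :: w) = 0 := hφ _ (by simp at hw ⊢; omega)
  rw [Bop_apply]
  simp [del, this]

theorem wtl_range' (q : K) : ∀ k a : ℕ, wtl q (List.range' a (k + 1)) (a + k + 1) = q
  | 0, a => by simp [wtl, wt_adj]
  | k + 1, a => by
    have := wtl_range' q k (a + 1)
    rw [List.range'_succ, wtl, List.map_cons, List.prod_cons, wt_far q (by omega), one_mul]
    rw [show a + (k + 1) + 1 = a + 1 + k + 1 by omega]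
    exact this

theorem wtl_concat (q : K) (a k j : ℕ) : wtl q (List.range' a (k + 1)) j =
    wtl q (List.range' a k) j * wt q (a + k) j := by
  rw [List.range'_1_concat]
  simp [wtl]

/-- In the `q`-shuffle algebra, the `q`-commutator of a segment with the next letter is a multiple
of the extended segment. -/
theorem S_glue (q : K) (k a : ℕ) (φ : List ℕ → K) :
    S q (List.range' a (k + 1)) (S q [a + k + 1] φ) =
      q • S q [a + k + 1] (S q (List.range' a (k + 1)) φ) +
        (1 - q ^ 2) • S q (List.range' a (k + 2)) φ := by
  induction k generalizing a φ with
  | zero =>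
    have := eq_zero_of_skew (S q [a] * S q [a + 1] - q • (S q [a + 1] * S q [a]) -
      (1 - q ^ 2) • S q [a, a + 1]) (fun φ => by simp [S_cons_nil])
      (fun j => ⟨wt q a j * wt q (a + 1) j, fun φ => ?_⟩) φ
    · rw [LinearMap.sub_apply, LinearMap.sub_apply, sub_sub] at this
      exact sub_eq_zero.1 this
    · have hw : wtl q [a, a + 1] j = wt q a j * wt q (a + 1) j := by simp [wtl]
      simp only [LinearMap.sub_apply, LinearMap.smul_apply, Module.End.mul_apply, map_sub,
        map_smul, del_S_single, del_S q j a [a + 1], hw, map_add]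
      rcases eq_or_ne a j with rfl | hi
      · simp only [if_neg (by omega : ¬ a + 1 = a), if_true, map_zero,
          wt_adj q (Or.inr rfl : a + 1 + 1 = a ∨ a + 1 = a + 1)]
        match_scalars <;> ring
      · rcases eq_or_ne (a + 1) j with rfl | hj
        · simp only [if_neg hi, if_true, map_zero,
            wt_adj q (Or.inl rfl : a + 1 = a + 1 ∨ a + 1 + 1 = a)]
          match_scalars <;> ring
        · simp only [if_neg hi, if_neg hj, map_zero]
          match_scalars <;> ring
  | succ k ih =>
    have := eq_zero_of_skew (S q (List.range' a (k + 2)) * S q [a + k + 2] -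
      q • (S q [a + k + 2] * S q (List.range' a (k + 2))) -
      (1 - q ^ 2) • S q (List.range' a (k + 3))) (fun φ => by simp [S_cons_nil, List.range'_succ])
      (fun j => ⟨wtl q (List.range' a (k + 2)) j * wt q (a + k + 2) j, fun φ => ?_⟩) φ
    · rw [LinearMap.sub_apply, LinearMap.sub_apply, sub_sub] at this
      exact sub_eq_zero.1 this
    · have hw : wtl q (List.range' a (k + 3)) j =
          wtl q (List.range' a (k + 2)) j * wt q (a + k + 2) j := wtl_concat q a (k + 2) j
      have h2 : ∀ m φ, del K j (S q (List.range' a (m + 1)) φ) =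
          wtl q (List.range' a (m + 1)) j • S q (List.range' a (m + 1)) (del K j φ) +
            if a = j then S q (List.range' (a + 1) m) φ else 0 := fun m φ => del_S q j a _ φ
      simp only [LinearMap.sub_apply, LinearMap.smul_apply, Module.End.mul_apply, map_sub,
        map_smul, del_S_single, h2, hw, map_add]
      rcases eq_or_ne a j with rfl | hi
      · have h3 := ih (a + 1) φ
        rw [show a + 1 + k + 1 = a + k + 2 by omega] at h3
        simp only [if_neg (by omega : ¬ a + k + 2 = a), if_true, map_zero, h3,
          wt_far q (by omega : a + k + 2 + 1 < a ∨ a + 1 < a + k + 2)]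
        match_scalars <;> ring
      · rcases eq_or_ne (a + k + 2) j with rfl | hj
        · have h4 := wtl_range' q (k + 1) a
          rw [show a + (k + 1) + 1 = a + k + 2 by omega] at h4
          simp only [if_neg hi, if_true, map_zero, h4]
          match_scalars <;> ring
        · simp only [if_neg hi, if_neg hj, map_zero]
          match_scalars <;> ring

theorem lead_E (q : K) (a k : ℕ) :
    Lead q (E q (Bop q) a k) ((1 - q ^ 2) ^ k) (List.range' a (k + 1)) := by
  induction k with
  | zero => rw [pow_zero]; exact lead_Bop q a
  | succ k ih =>
    intro d φ hφ w hw
    have hw' : d + k + 2 ≤ w.length := by simpa [add_assoc] using hw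
    have h1 := ih.comp (lead_Bop q (a + k + 1)) hφ (w := w) (by simp; omega)
    have h2 := (lead_Bop q (a + k + 1)).comp ih hφ (w := w) (by simp; omega)
    change E q (Bop q) a k (Bop q (a + k + 1) φ) w -
      q * Bop q (a + k + 1) (E q (Bop q) a k φ) w = _
    rw [h1, h2, S_glue]
    change _ * (1 * (q * _ + (1 - q ^ 2) * _)) - _ = _
    ring

/-- The product of segments in the `q`-shuffle algebra. -/
def Sp (q : K) : List (ℕ × ℕ) → List ℕ → K
  | [] => emptyWord K
  | p :: P => S q (List.range' p.1 (p.2 + 1)) (Sp q P)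

theorem Sp_length (q : K) : ∀ (P : List (ℕ × ℕ)) (w : List ℕ), w.length ≠ size P → Sp q P w = 0
  | [], w, h => by
    have : w ≠ [] := by rintro rfl; exact h rfl
    simp [Sp, emptyWord, this]
  | p :: P, w, h => by
    refine S_dep q w _ _ fun v hv => Sp_length q P v fun h' => h ?_
    rw [size_cons, ← hv, ← h', List.length_range']
    omega

/-- The top degree part of a product of root vectors, applied to the empty word, is a nonzero
multiple of the `q`-shuffle product of the segments. -/
theorem prodE_lead {q : K} (hq1 : 1 - q ^ 2 ≠ 0) (P : List (ℕ × ℕ)) :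
    DegLe (size P) (prodE q (Bop q) P (emptyWord K)) ∧ ∃ C : K, C ≠ 0 ∧ ∀ w : List ℕ,
      size P ≤ w.length → prodE q (Bop q) P (emptyWord K) w = C * Sp q P w := by
  induction P with
  | nil =>
    refine ⟨fun w hw => ?_, 1, one_ne_zero, fun w _ => by simp [prodE, Sp]⟩
    have : w ≠ [] := by rintro rfl; simp at hw
    simp [prodE, emptyWord, this]
  | cons p P ih =>
    obtain ⟨h1, C, hC, h2⟩ := ih
    rw [prodE_cons, Module.End.mul_apply, size_cons]
    refine ⟨?_, (1 - q ^ 2) ^ p.2 * C, mul_ne_zero (pow_ne_zero _ hq1) hC, fun w hw => ?_⟩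
    · have := (lead_E q p.1 p.2).degLe h1
      rwa [List.length_range', add_comm] at this
    · rw [lead_E q p.1 p.2 _ _ h1 w (by rw [List.length_range']; omega),
        S_congr q (ψ := C • Sp q P), map_smul, mul_assoc]
      · rfl
      · intro v hv
        rw [List.length_range'] at hv
        exact h2 v (by omega)

end Lead

/-! ### The largest word of a shuffle of segments -/

section Words

/-- `Shuf l z w`: the word `w` is a shuffle of the words `l` and `z`. -/
inductive Shuf : List ℕ → List ℕ → List ℕ → Prop
  | nil : Shuf [] [] []
  | left {l z w : List ℕ} (x : ℕ) : Shuf l z w → Shuf (x :: l) z (x :: w)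
  | right {l z w : List ℕ} (x : ℕ) : Shuf l z w → Shuf l (x :: z) (x :: w)

theorem shuf_nil_left {z w : List ℕ} (h : Shuf [] z w) : w = z := by
  induction z generalizing w with
  | nil => cases h; rfl
  | cons x z ih => cases h with | right _ h => rw [ih h]

theorem shuf_nil_right {z w : List ℕ} (h : Shuf z [] w) : w = z := by
  induction z generalizing w with
  | nil => cases h; rfl
  | cons x z ih => cases h with | left _ h => rw [ih h]

theorem exists_shuf {K : Type*} [Field K] (q : K) : ∀ (w l : List ℕ) (φ : List ℕ → K),
    S q l φ w ≠ 0 → ∃ z, φ z ≠ 0 ∧ Shuf l z w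
  | [], [], φ, h => ⟨[], h, .nil⟩
  | [], j :: l, φ, h => absurd rfl h
  | k :: w, [], φ, h => by
    obtain ⟨z, hz, hs⟩ := exists_shuf q w [] (del K k φ) h
    exact ⟨k :: z, hz, .right k hs⟩
  | k :: w, j :: l, φ, h => by
    change del K k (S q (j :: l) φ) w ≠ 0 at h
    rw [del_S] at h
    by_cases h1 : S q (j :: l) (del K k φ) w = 0
    · have h2 : j = k ∧ S q l φ w ≠ 0 := by
        by_contra! hc
        refine h ?_
        split_ifs with hj
        · simp [h1, hc hj]
        · simp [h1]
      obtain ⟨rfl, h2⟩ := h2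
      obtain ⟨z, hz, hs⟩ := exists_shuf q w l φ h2
      exact ⟨z, hz, .left j hs⟩
    · obtain ⟨z, hz, hs⟩ := exists_shuf q w (j :: l) (del K k φ) h1
      exact ⟨k :: z, hz, .right k hs⟩

theorem cons_le_cons {x y : ℕ} {u v : List ℕ} :
    x :: u ≤ y :: v ↔ x < y ∨ x = y ∧ u ≤ v := by
  rw [← not_lt, List.cons_lt_cons_iff, ← not_lt (a := v)]
  rcases lt_trichotomy x y with h | h | h
  · simp [h, h.not_gt, h.ne']
  · simp [h]
  · simp [h, h.not_gt, h.ne']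

/-- The word is at most the infinite periodic word `c, c+1, …, b, a, …, b, a, …, b, …`. -/
def Below (a b : ℕ) : ℕ → List ℕ → Prop
  | _, [] => True
  | c, x :: z => x < c ∨ x = c ∧ Below a b (if c = b then a else c + 1) z

theorem Below.of_le {a b : ℕ} : ∀ {c : ℕ} {u v : List ℕ}, u ≤ v → Below a b c v → Below a b c u
  | _, [], _, _, _ => trivial
  | _, x :: u, [], h, _ => absurd h (not_le.2 (List.nil_lt_cons _ _))
  | c, x :: u, y :: v, h, hv => by
    rw [cons_le_cons] at h
    rcases h with h | ⟨rfl, h⟩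
    · rcases hv with hv | ⟨hv, -⟩
      · exact Or.inl (h.trans hv)
      · exact Or.inl (hv ▸ h)
    · rcases hv with hv | ⟨hv, hv'⟩
      · exact Or.inl hv
      · exact Or.inr ⟨hv, Below.of_le h hv'⟩

theorem cons_le {x : ℕ} {u v : List ℕ} (h : u ≤ v) : x :: u ≤ x :: v :=
  cons_le_cons.2 (Or.inr ⟨rfl, h⟩)

theorem append_le (l : List ℕ) {u v : List ℕ} (h : u ≤ v) : l ++ u ≤ l ++ v := by
  induction l with
  | nil => exact h
  | cons x l ih => exact cons_le ih

theorem cons_le_of_lt {x y : ℕ} {u v : List ℕ} (h : x < y) : x :: u ≤ y :: v :=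
  cons_le_cons.2 (Or.inl h)

theorem shuf_le_of_head {a : ℕ} {z : List ℕ} (hz : ∀ x ∈ z.head?, x ≤ a) :
    ∀ (m c : ℕ), a < c → ∀ w, Shuf (List.range' c m) z w → w ≤ List.range' c m ++ z
  | 0, _, _, w, h => (shuf_nil_left h).le
  | m + 1, c, hc, w, h => by
    rw [List.range'_succ] at h ⊢
    cases h with
    | left _ h => exact cons_le (shuf_le_of_head hz m (c + 1) (by omega) _ h)
    | right x h =>
      have := hz x rfl
      exact cons_le_of_lt (by omega)

theorem rot_le {a b c : ℕ} (hac : a ≤ c) (hcb : c ≤ b) : List.range' a (b + 1 - a) ≤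
    List.range' c (b + 1 - c) ++ List.range' a (c - a) := by
  rcases hac.eq_or_lt with rfl | hac
  · simp
  · obtain ⟨m, hm⟩ : ∃ m, b + 1 - a = m + 1 := ⟨b - a, by omega⟩
    obtain ⟨m', hm'⟩ : ∃ m, b + 1 - c = m + 1 := ⟨b - c, by omega⟩
    rw [hm, hm', List.range'_succ, List.range'_succ]
    exact cons_le_of_lt hac

/-- Bound for shuffles of the segment `[a,b] = p · s`, where `s = [c,b]`, with a word below the
periodic word `s · p · s · p ⋯`. -/
theorem shuf_le {a b : ℕ} : ∀ (z : List ℕ) (c : ℕ), a ≤ c → c ≤ b → Below a b c z →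
    ∀ w, Shuf (List.range' a (b + 1 - a)) z w →
      w ≤ List.range' c (b + 1 - c) ++ (List.range' a (c - a) ++ z)
  | [], c, hac, hcb, _, w, h => by
    rw [shuf_nil_right h, List.append_nil]
    exact rot_le hac hcb
  | x :: z, c, hac, hcb, hR, w, h => by
    have IH := shuf_le (a := a) (b := b) z
    obtain ⟨m, hm⟩ : ∃ m, b + 1 - c = m + 1 := ⟨b - c, by omega⟩
    obtain ⟨m', hm'⟩ : ∃ m, b + 1 - a = m + 1 := ⟨b - a, by omega⟩
    rw [hm, List.range'_succ]
    have hx : x ≤ c := by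
      rcases hR with h | ⟨h, -⟩ <;> omega
    generalize hl : List.range' a (b + 1 - a) = l at h
    cases h with
    | left y h =>
      rw [hm', List.range'_succ] at hl
      obtain ⟨rfl, rfl⟩ := List.cons.inj hl
      rcases hac.eq_or_lt with rfl | hac
      · obtain rfl : m = m' := by omega
        rw [Nat.sub_self]
        exact cons_le (shuf_le_of_head (fun y hy => by cases hy; exact hx) m _ (Nat.lt_succ_self _) _ h)
      · exact cons_le_of_lt hac
    | right _ h =>
      subst hl
      rcases hR with hR | ⟨rfl, hR⟩
      · exact cons_le_of_lt hR
      · refine cons_le ?_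
        split_ifs at hR with hb
        · subst hb
          have := IH a le_rfl hac hR _ h
          obtain rfl : m = 0 := by omega
          rw [show x + 1 - a = (x - a) + 1 by omega, List.range'_1_concat,
            show a + (x - a) = x by omega] at this
          simpa using this
        · have := IH (x + 1) (by omega) (by omega) hR _ h
          rw [show x + 1 - a = (x - a) + 1 by omega, List.range'_1_concat,
            show a + (x - a) = x by omega, show b + 1 - (x + 1) = m by omega] at this
          simpa using this

/-- The concatenation of a list of segments. -/
def cat : List (ℕ × ℕ) → List ℕ
  | [] => []
  | p :: P => List.range' p.1 (p.2 + 1) ++ cat P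

theorem length_cat : ∀ P, (cat P).length = size P
  | [] => rfl
  | p :: P => by rw [cat, size_cons, List.length_append, List.length_range', length_cat P]

/-- Lexicographically nonincreasing lists of segments. -/
def Sorted (P : List (ℕ × ℕ)) : Prop := P.Pairwise fun p p' => ¬ plt p p'

theorem sorted_of_isChain {P : List (ℕ × ℕ)} (h : P.IsChain fun p p' => ¬ plt p p') :
    Sorted P := by
  have : IsTrans (ℕ × ℕ) fun p p' => ¬ plt p p' := ⟨fun p p' p'' h h' => by
    unfold plt at *; omega⟩
  exact List.isChain_iff_pairwise.1 h

theorem below_range' {a b : ℕ} : ∀ (m c : ℕ) (z : List ℕ),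
    (c + m = b ∧ Below a b a z) ∨ (c + m < b ∧ Below a b (c + m + 1) z) →
      Below a b c (List.range' c (m + 1) ++ z)
  | 0, c, z, h => by
    refine Or.inr ⟨rfl, ?_⟩
    rcases h with ⟨h, hz⟩ | ⟨h, hz⟩
    · rw [if_pos (by omega)]; exact hz
    · rw [if_neg (by omega)]; exact hz
  | m + 1, c, z, h => by
    have := below_range' m (c + 1) z (by rwa [show c + 1 + m = c + (m + 1) by omega])
    refine Or.inr ⟨rfl, ?_⟩
    rw [if_neg (by omega)]
    exact this

theorem below_cat {a k : ℕ} : ∀ {P : List (ℕ × ℕ)}, Sorted P → (∀ p ∈ P, ¬ plt (a, k) p) →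
    Below a (a + k) a (cat P)
  | [], _, _ => trivial
  | (c, m) :: P, hP, h => by
    have h1 := h (c, m) (by simp)
    have hP' := List.pairwise_cons.1 hP
    have IH := below_cat hP'.2 fun p hp => h p (by simp [hp])
    unfold plt at h1
    simp only [not_or, not_and, not_lt] at h1
    rcases h1.1.lt_or_eq with hc | rfl
    · exact Or.inl hc
    · refine below_range' m c _ ?_
      rcases (h1.2 rfl).lt_or_eq with hm | rfl
      · refine Or.inr ⟨by omega, ?_⟩
        -- the next segment starts with a letter which is at most `c`
        cases P with
        | nil => trivial
        | cons p P =>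
          have h2 := hP'.1 p (by simp)
          unfold plt at h2
          simp only [not_or, not_and, not_lt] at h2
          exact Or.inl (by omega)
      · exact Or.inl ⟨rfl, IH⟩

/-- The largest word in a product of a nonincreasing list of segments is their concatenation. -/
theorem le_cat {K : Type*} [Field K] (q : K) : ∀ {P : List (ℕ × ℕ)}, Sorted P →
    ∀ {w : List ℕ}, Sp q P w ≠ 0 → w ≤ cat P
  | [], _, w, h => by
    by_cases hw : w = []
    · exact hw.le
    · simp [Sp, emptyWord, hw] at h
  | (a, k) :: P, hP, w, h => by
    have hP' := List.pairwise_cons.1 hP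
    obtain ⟨u, hu, hs⟩ := exists_shuf q w _ _ h
    have hle := le_cat q hP'.2 hu
    have hb := (below_cat hP'.2 hP'.1).of_le hle
    have hk : a + k + 1 - a = k + 1 := by omega
    have := shuf_le u a le_rfl (Nat.le_add_right a k) hb w (by rw [hk]; exact hs)
    rw [hk, Nat.sub_self] at this
    exact this.trans (append_le _ hle)

theorem cat_ne_of_lt {a k m : ℕ} {P Q : List (ℕ × ℕ)} (hP : Sorted ((a, k) :: P)) (h : k < m) :
    cat ((a, k) :: P) ≠ cat ((a, m) :: Q) := by
  intro he
  obtain ⟨d, rfl⟩ : ∃ d, m = k + 1 + d := ⟨m - k - 1, by omega⟩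
  have h1 : List.range' a (k + 1 + d + 1) =
      List.range' a (k + 1) ++ List.range' (a + (k + 1)) (d + 1) := by
    rw [List.range'_append_1, add_assoc]
  simp only [cat] at he
  rw [h1, List.append_assoc, List.append_cancel_left_eq] at he
  cases P with
  | nil => simp [cat, List.range'_succ] at he
  | cons p P =>
    have h2 := (List.pairwise_cons.1 hP).1 p (by simp)
    rw [cat, List.range'_succ, List.range'_succ] at he
    have := (List.cons.inj he).1
    exact h2 (Or.inl (by show a < p.1; omega))

theorem cat_inj : ∀ {P Q : List (ℕ × ℕ)}, Sorted P → Sorted Q → cat P = cat Q → P = Q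
  | [], [], _, _, _ => rfl
  | [], q :: Q, _, _, h => by simp [cat, List.range'_succ] at h
  | p :: P, [], _, _, h => by simp [cat, List.range'_succ] at h
  | (a, k) :: P, (c, m) :: Q, hP, hQ, h => by
    have h1 : a = c := by
      rw [cat, cat, List.range'_succ, List.range'_succ] at h
      exact (List.cons.inj h).1
    subst h1
    rcases lt_trichotomy k m with hkm | rfl | hkm
    · exact absurd h (cat_ne_of_lt hP hkm)
    · rw [cat, cat, List.append_cancel_left_eq] at h
      rw [cat_inj (List.pairwise_cons.1 hP).2 (List.pairwise_cons.1 hQ).2 h]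
    · exact absurd h.symm (cat_ne_of_lt hQ hkm)

end Words

/-! ### Positivity and linear independence -/

section Indep

/-- Laurent polynomials whose value at `q = 1` is positive. -/
def Pos (r : RatFunc ℚ) : Prop :=
  ∃ (k : ℕ) (p : Polynomial ℚ), r * RatFunc.X ^ k = algebraMap _ (RatFunc ℚ) p ∧ 0 < p.eval 1

theorem Pos.ne_zero {r : RatFunc ℚ} (h : Pos r) : r ≠ 0 := by
  rintro rfl
  obtain ⟨k, p, hp, h0⟩ := h
  rw [zero_mul, eq_comm, map_eq_zero_iff _ (RatFunc.algebraMap_injective ℚ)] at hp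
  simp [hp] at h0

theorem Pos.add {r s : RatFunc ℚ} (hr : Pos r) (hs : Pos s) : Pos (r + s) := by
  obtain ⟨k, p, hp, h0⟩ := hr
  obtain ⟨m, p', hp', h0'⟩ := hs
  refine ⟨k + m, p * Polynomial.X ^ m + p' * Polynomial.X ^ k, ?_, ?_⟩
  · rw [map_add, map_mul, map_mul, map_pow, map_pow, RatFunc.algebraMap_X, ← hp, ← hp']
    ring
  · simpa using add_pos h0 h0'

theorem Pos.mul {r s : RatFunc ℚ} (hr : Pos r) (hs : Pos s) : Pos (r * s) := by
  obtain ⟨k, p, hp, h0⟩ := hr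
  obtain ⟨m, p', hp', h0'⟩ := hs
  refine ⟨k + m, p * p', ?_, ?_⟩
  · rw [map_mul, ← hp, ← hp']
    ring
  · simpa using mul_pos h0 h0'

theorem pos_one : Pos 1 := ⟨0, 1, by simp, by simp⟩

theorem pos_X : Pos RatFunc.X := ⟨0, Polynomial.X, by simp, by simp⟩

theorem pos_X_inv : Pos (RatFunc.X)⁻¹ := ⟨1, 1, by simp [RatFunc.X_ne_zero], by simp⟩

theorem pos_wt (i j : ℕ) : Pos (wt RatFunc.X i j) := by
  unfold wt
  split_ifs
  · exact pos_X_inv.mul pos_X_inv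
  · exact pos_X
  · exact pos_one

theorem pos_wtl (l : List ℕ) (j : ℕ) : Pos (wtl RatFunc.X l j) := by
  induction l with
  | nil => exact pos_one
  | cons i l ih =>
    rw [wtl, List.map_cons, List.prod_cons]
    exact (pos_wt i j).mul ih

theorem nonneg_add {r s : RatFunc ℚ} (hr : r = 0 ∨ Pos r) (hs : s = 0 ∨ Pos s) :
    r + s = 0 ∨ Pos (r + s) := by
  rcases hr with rfl | hr
  · rwa [zero_add]
  · rcases hs with rfl | hs
    · rw [add_zero]; exact Or.inr hr
    · exact Or.inr (hr.add hs)

theorem nonneg_mul {r s : RatFunc ℚ} (hr : Pos r) (hs : s = 0 ∨ Pos s) :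
    r * s = 0 ∨ Pos (r * s) := by
  rcases hs with rfl | hs
  · exact Or.inl (mul_zero r)
  · exact Or.inr (hr.mul hs)

theorem S_nonneg : ∀ (w l : List ℕ) (φ : List ℕ → RatFunc ℚ), (∀ v, φ v = 0 ∨ Pos (φ v)) →
    S RatFunc.X l φ w = 0 ∨ Pos (S RatFunc.X l φ w)
  | [], [], φ, h => h []
  | [], j :: l, φ, _ => Or.inl rfl
  | k :: w, [], φ, h => S_nonneg w [] (del _ k φ) fun v => h (k :: v)
  | k :: w, j :: l, φ, h => by
    have h1 := S_nonneg w (j :: l) (del _ k φ) fun v => h (k :: v)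
    have h2 := S_nonneg w l φ h
    change del _ k (S RatFunc.X (j :: l) φ) w = 0 ∨ Pos (del _ k (S RatFunc.X (j :: l) φ) w)
    rw [del_S]
    refine nonneg_add (nonneg_mul (pos_wtl _ _) h1) ?_
    split_ifs
    · exact h2
    · exact Or.inl rfl

theorem S_pos : ∀ (l w : List ℕ) (φ : List ℕ → RatFunc ℚ), (∀ v, φ v = 0 ∨ Pos (φ v)) →
    Pos (φ w) → Pos (S RatFunc.X l φ (l ++ w))
  | [], w, φ, _, hw => by rw [S_nil]; exact hw
  | j :: l, w, φ, h, hw => by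
    have h1 := S_nonneg (l ++ w) (j :: l) (del _ j φ) fun v => h (j :: v)
    have h2 := S_pos l w φ h hw
    change Pos (del _ j (S RatFunc.X (j :: l) φ) (l ++ w))
    rw [del_S, if_pos rfl]
    change Pos (wtl RatFunc.X (j :: l) j * S RatFunc.X (j :: l) (del _ j φ) (l ++ w) +
      S RatFunc.X l φ (l ++ w))
    rcases nonneg_mul (pos_wtl (j :: l) j) h1 with h | h
    · rw [h, zero_add]; exact h2
    · exact h.add h2

theorem Sp_pos (P : List (ℕ × ℕ)) : (∀ v, Sp (RatFunc.X : RatFunc ℚ) P v = 0 ∨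
    Pos (Sp RatFunc.X P v)) ∧ Pos (Sp RatFunc.X P (cat P)) := by
  induction P with
  | nil =>
    refine ⟨fun v => ?_, ?_⟩
    · by_cases hv : v = []
      · right; simpa [Sp, emptyWord, hv] using pos_one
      · left; simp [Sp, emptyWord, hv]
    · simpa [Sp, cat, emptyWord] using pos_one
  | cons p P ih => exact ⟨fun v => S_nonneg v _ _ ih.1, S_pos _ _ _ ih.1 ih.2⟩

theorem one_sub_X_sq_ne_zero : (1 : RatFunc ℚ) - RatFunc.X ^ 2 ≠ 0 := by
  intro h
  have : (algebraMap (Polynomial ℚ) (RatFunc ℚ)) (1 - Polynomial.X ^ 2) = 0 := by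
    simpa using h
  rw [map_eq_zero_iff _ (RatFunc.algebraMap_injective ℚ)] at this
  have := congrArg (Polynomial.eval 0) this
  simp at this

/-- Ordered products of root vectors, applied to the empty word, are triangular with respect to
the degree and then the lexicographic order on words. -/
theorem indep_model : LinearIndependent (RatFunc ℚ) (fun P : {P : List (ℕ × ℕ) // Sorted P} =>
    prodE (RatFunc.X : RatFunc ℚ) (Bop RatFunc.X) P.1 (emptyWord (RatFunc ℚ))) := by
  classical
  rw [linearIndependent_iff']
  intro s g hg
  by_contra! hne
  obtain ⟨i, hi, hgi⟩ := hne
  obtain ⟨P, hP, hmax⟩ := Finset.exists_max_image (s.filter fun i => g i ≠ 0)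
    (fun P => toLex (size P.1, cat P.1)) ⟨i, by simp [hi, hgi]⟩
  rw [Finset.mem_filter] at hP
  have h0 := congrFun hg (cat P.1)
  rw [Finset.sum_apply, Finset.sum_eq_single_of_mem P hP.1] at h0
  · obtain ⟨-, C, hC, h⟩ := prodE_lead one_sub_X_sq_ne_zero P.1
    rw [Pi.smul_apply, h _ (length_cat _).ge, smul_eq_mul] at h0
    exact mul_ne_zero hP.2 (mul_ne_zero hC (Sp_pos P.1).2.ne_zero) h0
  · intro Q hQ hQP
    by_cases hgQ : g Q = 0
    · simp [hgQ]
    have hle := hmax Q (by simp [hQ, hgQ])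
    rw [Prod.Lex.toLex_le_toLex] at hle
    obtain ⟨-, C, hC, h⟩ := prodE_lead one_sub_X_sq_ne_zero Q.1
    have hsz : size Q.1 ≤ size P.1 := by rcases hle with h | h <;> [exact h.le; exact h.1.le]
    rw [Pi.smul_apply, h _ (by rw [length_cat]; exact hsz)]
    suffices h' : Sp (RatFunc.X : RatFunc ℚ) Q.1 (cat P.1) = 0 by rw [h', mul_zero, smul_zero]
    by_contra hS
    have h1 : size Q.1 = size P.1 := by
      by_contra hne
      exact hS (Sp_length _ _ _ (by rw [length_cat]; exact fun h => hne h.symm))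
    have h2 := le_cat _ Q.2 hS
    rcases hle with h | h
    · exact absurd h1 h.ne
    · exact hQP (Subtype.ext (cat_inj Q.2 P.2 (le_antisymm h.2 h2)))

end Indep

/-! ### Segments of `Fin n` as pairs of natural numbers -/

section Segments

variable {n : ℕ}

/-- The pair `(a, k)` encoding the segment `v_a ⋯ v_{a+k}`; the value on the empty word is
irrelevant. -/
def enc : List (Fin n) → ℕ × ℕ
  | [] => (0, 0)
  | x :: t => (x, t.length)

theorem map_val_of_isSegment {l : List (Fin n)} (h : IsSegment l) :
    l.map Fin.val = List.range' (enc l).1 ((enc l).2 + 1) := by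
  obtain ⟨hne, hc⟩ := h
  induction l with
  | nil => exact absurd rfl hne
  | cons x t ih =>
    cases t with
    | nil => rfl
    | cons y t =>
      have hc' := List.isChain_cons_cons.1 hc
      have := ih (by simp) hc'.2
      rw [List.map_cons, this]
      simp only [enc, List.length_cons, hc'.1]
      rw [← List.range'_succ]

theorem enc_of_map_val {l : List (Fin n)} {a k : ℕ} (h : l.map Fin.val = List.range' a (k + 1)) :
    enc l = (a, k) := by
  cases l with
  | nil => simp [List.range'_succ] at h
  | cons x t =>
    have h' := congrArg List.length h
    simp only [List.map_cons, List.range'_succ, List.cons.injEq] at h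
    simp at h'
    simp [enc, h.1, h']

theorem isSegment_of_map_val {l : List (Fin n)} {a k : ℕ}
    (h : l.map Fin.val = List.range' a (k + 1)) : IsSegment l := by
  refine ⟨by rintro rfl; simp [List.range'_succ] at h, ?_⟩
  have := List.isChain_range' a (k + 1) 1
  rw [← h, List.isChain_map] at this
  exact this

theorem enc_lt {l : List (Fin n)} (h : IsSegment l) : (enc l).1 + (enc l).2 < n := by
  have h1 : (enc l).1 + (enc l).2 ∈ l.map Fin.val := by
    rw [map_val_of_isSegment h]
    simp
  obtain ⟨x, -, hx⟩ := List.mem_map.1 h1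
  rw [← hx]
  exact x.2

theorem enc_inj {l l' : List (Fin n)} (h : IsSegment l) (h' : IsSegment l')
    (he : enc l = enc l') : l = l' := by
  apply List.map_injective_iff.2 Fin.val_injective
  rw [map_val_of_isSegment h, map_val_of_isSegment h', he]

theorem exists_segment {a k : ℕ} (h : a + k < n) : ∃ l : List (Fin n), IsSegment l ∧
    enc l = (a, k) := by
  have : (((List.range' a (k + 1)).pmap (fun i hi => (⟨i, hi⟩ : Fin n))
      (fun i hi => by simp at hi; omega)).map Fin.val) = List.range' a (k + 1) := by
    simp [List.map_pmap]
  exact ⟨_, isSegment_of_map_val this, enc_of_map_val this⟩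

theorem range'_lt : ∀ k m a c : ℕ, List.range' a (k + 1) < List.range' c (m + 1) ↔
    plt (a, k) (c, m)
  | 0, 0, a, c => by
    simp [plt, List.cons_lt_cons_iff]
  | 0, m + 1, a, c => by
    rw [List.range'_succ, List.range'_succ, List.cons_lt_cons_iff]
    simp [plt, List.range'_succ]
  | k + 1, 0, a, c => by
    rw [List.range'_succ (n := k + 1), List.range'_succ (n := 0), List.cons_lt_cons_iff]
    simp [plt]
  | k + 1, m + 1, a, c => by
    have := range'_lt k m (a + 1) (c + 1)
    rw [List.range'_succ (n := k + 1), List.range'_succ (n := m + 1), List.cons_lt_cons_iff, this]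
    simp only [plt]
    omega

theorem map_val_lt : ∀ l l' : List (Fin n), LexLt l l' ↔ l.map Fin.val < l'.map Fin.val
  | [], [] => by simp [LexLt]
  | [], x :: l => by simp [LexLt]
  | x :: l, [] => by simp [LexLt]
  | x :: l, y :: l' => by
    have := map_val_lt l l'
    change x :: l < y :: l' ↔ _
    rw [List.cons_lt_cons_iff, List.map_cons, List.map_cons, List.cons_lt_cons_iff, ← this,
      Fin.lt_def, Fin.ext_iff]
    rfl

theorem lexLt_iff {l l' : List (Fin n)} (h : IsSegment l) (h' : IsSegment l') :
    LexLt l l' ↔ plt (enc l) (enc l') := by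
  rw [map_val_lt, map_val_of_isSegment h, map_val_of_isSegment h', range'_lt]

theorem isChain_enc {L : List (List (Fin n))} (h : ∀ l ∈ L, IsSegment l) :
    L.IsChain (fun a b => ¬ LexLt a b) ↔ (L.map enc).IsChain fun p p' => ¬ plt p p' := by
  rw [List.isChain_map]
  induction L with
  | nil => simp
  | cons l L ih =>
    cases L with
    | nil => simp
    | cons l' L =>
      rw [List.isChain_cons_cons, List.isChain_cons_cons, ih fun x hx => h x (by simp [hx]),
        lexLt_iff (h l (by simp)) (h l' (by simp))]

theorem map_enc_inj : ∀ {L L' : List (List (Fin n))}, (∀ l ∈ L, IsSegment l) →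
    (∀ l ∈ L', IsSegment l) → L.map enc = L'.map enc → L = L'
  | [], [], _, _, _ => rfl
  | [], l :: L, _, _, h => by simp at h
  | l :: L, [], _, _, h => by simp at h
  | l :: L, l' :: L', h, h', he => by
    simp only [List.map_cons, List.cons.injEq] at he
    rw [enc_inj (h l (by simp)) (h' l' (by simp)) he.1,
      map_enc_inj (fun x hx => h x (by simp [hx])) (fun x hx => h' x (by simp [hx])) he.2]

theorem exists_map_enc : ∀ {P : List (ℕ × ℕ)}, (∀ p ∈ P, p.1 + p.2 < n) →
    ∃ L : List (List (Fin n)), (∀ l ∈ L, IsSegment l) ∧ L.map enc = P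
  | [], _ => ⟨[], by simp⟩
  | p :: P, h => by
    obtain ⟨L, hL, rfl⟩ := exists_map_enc fun x hx => h x (List.mem_cons_of_mem p hx)
    obtain ⟨l, hl, he⟩ := exists_segment (h p (by simp))
    exact ⟨l :: L, by simpa using ⟨hl, hL⟩, by simp [he]⟩

end Segments

/-! ### The algebra `Ui n` -/

section Bridge

variable (n : ℕ)

/-- The generators of `Ui n`, extended by zero to all natural numbers. -/
noncomputable def gen (i : ℕ) : Ui n := if h : i < n then Bgen n ⟨i, h⟩ else 0

variable {n}

theorem gen_of_lt {i : ℕ} (h : i < n) : gen n i = Bgen n ⟨i, h⟩ := dif_pos h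

theorem gen_of_ge {i : ℕ} (h : n ≤ i) : gen n i = 0 := dif_neg (not_lt.2 h)

theorem gen_comm (i j : ℕ) (h : i + 1 < j) : gen n i * gen n j = gen n j * gen n i := by
  by_cases hj : j < n
  · rw [gen_of_lt hj, gen_of_lt (by omega : i < n)]
    have := RingQuot.mkAlgHom_rel (RatFunc ℚ)
      (UiRel.comm (⟨i, by omega⟩ : Fin n) ⟨j, hj⟩ h)
    rw [map_mul, map_mul] at this
    exact this
  · rw [gen_of_ge (not_lt.1 hj), mul_zero, zero_mul]

/-- For `i ≥ n` all terms containing `gen n i` vanish, so the inhomogeneous term is present for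
`i < n` only. -/
theorem gen_serre (i j : ℕ) (h : i + 1 = j ∨ j + 1 = i) :
    gen n i * gen n i * gen n j + gen n j * gen n i * gen n i =
      ((RatFunc.X : RatFunc ℚ) + (RatFunc.X : RatFunc ℚ)⁻¹) • (gen n i * gen n j * gen n i) +
        (if i < n then (1 : RatFunc ℚ) else 0) • gen n j := by
  by_cases hij : i < n ∧ j < n
  · obtain ⟨hi, hj⟩ := hij
    rw [gen_of_lt hi, gen_of_lt hj, if_pos hi, one_smul]
    have := RingQuot.mkAlgHom_rel (RatFunc ℚ) (UiRel.serre (⟨i, hi⟩ : Fin n) ⟨j, hj⟩ h)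
    simp only [map_add, map_mul, map_smul] at this
    exact this
  · rcases Nat.lt_or_ge j n with hj | hj
    · have hi : ¬ i < n := fun hi => hij ⟨hi, hj⟩
      simp [gen_of_ge (not_lt.1 hi), hi]
    · simp [gen_of_ge hj]

/-- Ordered products of root vectors span `Ui n`. -/
theorem span_prodE : Submodule.span (RatFunc ℚ) {x : Ui n | ∃ P : List (ℕ × ℕ),
    P.IsChain (fun p p' => ¬ plt p p') ∧ x = prodE (RatFunc.X : RatFunc ℚ) (gen n) P} = ⊤ := by
  have hall : Submodule.span (RatFunc ℚ)
      (Set.range fun P => prodE (RatFunc.X : RatFunc ℚ) (gen n) P) = ⊤ := by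
    set T := Submodule.span (RatFunc ℚ)
      (Set.range fun P => prodE (RatFunc.X : RatFunc ℚ) (gen n) P) with hT
    refine eq_top_iff.2 fun x _ => ?_
    obtain ⟨y, rfl⟩ := RingQuot.mkAlgHom_surjective (RatFunc ℚ) (UiRel n) x
    have hmul : T * T ≤ T := by
      rw [hT, Submodule.span_mul_span]
      refine Submodule.span_le.2 ?_
      rintro _ ⟨_, ⟨P, rfl⟩, _, ⟨Q, rfl⟩, rfl⟩
      exact Submodule.subset_span ⟨P ++ Q, prodE_append _ _ _ _⟩
    induction y using FreeAlgebra.induction with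
    | grade0 r =>
      rw [AlgHom.commutes, Algebra.algebraMap_eq_smul_one]
      exact Submodule.smul_mem _ _ (Submodule.subset_span ⟨[], rfl⟩)
    | grade1 i =>
      refine Submodule.subset_span ⟨[((i : ℕ), 0)], ?_⟩
      simp [prodE, E, gen_of_lt i.2, Bgen]
    | mul a b ha hb =>
      rw [map_mul]
      exact hmul (Submodule.mul_mem_mul (ha trivial) (hb trivial))
    | add a b ha hb =>
      rw [map_add]
      exact add_mem (ha trivial) (hb trivial)
  rw [eq_top_iff, ← hall, Submodule.span_le]
  rintro _ ⟨P, rfl⟩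
  have hX : (RatFunc.X : RatFunc ℚ) + (RatFunc.X : RatFunc ℚ)⁻¹ ≠ 0 := (pos_X.add pos_X_inv).ne_zero
  exact span_sorted (ξ := fun i _ => if i < n then 1 else 0) RatFunc.X_ne_zero hX gen_comm
    gen_serre (fun i hi => gen_of_ge hi) P

theorem BsegRev_eq_E (a k : ℕ) : ∀ l : List (Fin n), l.map Fin.val = List.range' a (k + 1) →
    BsegRev l.reverse = E (RatFunc.X : RatFunc ℚ) (gen n) a k := by
  induction k with
  | zero =>
    intro l h
    obtain ⟨x, rfl⟩ : ∃ x, l = [x] := List.length_eq_one_iff.1 (by simpa using congrArg List.length h)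
    have hx : (x : ℕ) = a := by simpa using h
    subst hx
    simp [BsegRev, E, gen_of_lt x.2]
  | succ k ih =>
    intro l h
    rw [List.range'_1_concat] at h
    obtain ⟨l', l'', rfl, h1, h2⟩ := List.map_eq_append_iff.1 h
    obtain ⟨x, rfl⟩ : ∃ x, l'' = [x] :=
      List.length_eq_one_iff.1 (by simpa using congrArg List.length h2)
    have hx : (x : ℕ) = a + k + 1 := by simpa [add_assoc] using h2
    have h3 := ih l' h1
    obtain ⟨y, t, ht⟩ : ∃ y t, l'.reverse = y :: t := by
      refine List.exists_cons_of_ne_nil fun h0 => ?_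
      rw [List.reverse_eq_nil_iff.1 h0] at h1
      simp [List.range'_succ] at h1
    rw [List.reverse_append, List.reverse_singleton, List.singleton_append]
    rw [ht] at h3 ⊢
    rw [BsegRev, h3, E, ← hx, gen_of_lt x.2]

theorem prod_Bseg {L : List (List (Fin n))} (h : ∀ l ∈ L, IsSegment l) :
    (L.map Bseg).prod = prodE (RatFunc.X : RatFunc ℚ) (gen n) (L.map enc) := by
  rw [prodE, List.map_map]
  congr 1
  exact List.map_congr_left fun l hl => BsegRev_eq_E _ _ l (map_val_of_isSegment (h l hl))

variable (n) in
/-- The action of `Ui n` on the algebra generated by the letters in the `q`-shuffle algebra. -/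
noncomputable def rep : Ui n →ₐ[RatFunc ℚ] Module.End (RatFunc ℚ) (M (RatFunc.X : RatFunc ℚ)) :=
  RingQuot.liftAlgHom (RatFunc ℚ) ⟨FreeAlgebra.lift (RatFunc ℚ) fun i : Fin n =>
    (Bop RatFunc.X i).restrict fun _ hx => Bop_mem i hx, by
      intro x y h
      induction h with
      | comm i j h =>
        simp only [map_mul, FreeAlgebra.lift_ι_apply]
        ext x : 2
        exact Bop_comm RatFunc.X h x.2
      | serre i j h =>
        simp only [map_mul, map_add, map_smul, FreeAlgebra.lift_ι_apply]
        ext x : 2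
        exact Bop_serre RatFunc.X_ne_zero one_sub_X_sq_ne_zero h x.2⟩

theorem rep_gen {i : ℕ} (h : i < n) (x : M (RatFunc.X : RatFunc ℚ)) :
    (rep n (gen n i) x : List ℕ → RatFunc ℚ) = Bop RatFunc.X i x := by
  rw [gen_of_lt h, rep, Bgen, RingQuot.liftAlgHom_mkAlgHom_apply, FreeAlgebra.lift_ι_apply]
  rfl

theorem rep_E {a : ℕ} : ∀ {k : ℕ}, a + k < n → ∀ x : M (RatFunc.X : RatFunc ℚ),
    (rep n (E (RatFunc.X : RatFunc ℚ) (gen n) a k) x : List ℕ → RatFunc ℚ) =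
      E (RatFunc.X : RatFunc ℚ) (Bop RatFunc.X) a k x
  | 0, h, x => rep_gen h x
  | k + 1, h, x => by
    have h1 := fun x => rep_E (a := a) (k := k) (by omega) x
    have h2 := fun x => rep_gen (n := n) (i := a + k + 1) (by omega) x
    simp only [E, map_sub, map_smul, map_mul, LinearMap.sub_apply, LinearMap.smul_apply,
      Module.End.mul_apply, Submodule.coe_sub, Submodule.coe_smul, h1, h2]

theorem rep_prodE : ∀ {P : List (ℕ × ℕ)}, (∀ p ∈ P, p.1 + p.2 < n) →
    ∀ x : M (RatFunc.X : RatFunc ℚ),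
    (rep n (prodE (RatFunc.X : RatFunc ℚ) (gen n) P) x : List ℕ → RatFunc ℚ) =
      prodE (RatFunc.X : RatFunc ℚ) (Bop RatFunc.X) P x
  | [], _, x => by simp [prodE]
  | p :: P, h, x => by
    rw [prodE_cons, prodE_cons, map_mul, Module.End.mul_apply, Module.End.mul_apply,
      rep_E (h p (by simp)), rep_prodE fun p hp => h p (by simp [hp])]

variable (n) in
/-- The action of `Ui n` on the empty word. -/
noncomputable def orbit : Ui n →ₗ[RatFunc ℚ] (List ℕ → RatFunc ℚ) :=
  (M (RatFunc.X : RatFunc ℚ)).subtype ∘ₗ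
    LinearMap.applyₗ ⟨emptyWord _, emptyWord_mem _⟩ ∘ₗ (rep n).toLinearMap

end Bridge

end UiPBW

/-- The products `B_{[a₁,b₁]} ⋯ B_{[a_m,b_m]}` over lexicographically nonincreasing lists of
segments form a `ℚ(q)`-basis of `U^ı(sl_{n+1})` (the Lyndon basis = PBW-type basis). -/
theorem lyndon_basis_of_Ui {n : ℕ} :
    LinearIndependent (RatFunc ℚ)
      (fun L : {L : List (List (Fin n)) //
          (∀ l ∈ L, IsSegment l) ∧ L.Chain' (fun a b => ¬ LexLt a b)} =>
        ((L.val.map Bseg).prod : Ui n)) ∧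
    Submodule.span (RatFunc ℚ)
      (Set.range (fun L : {L : List (List (Fin n)) //
          (∀ l ∈ L, IsSegment l) ∧ L.Chain' (fun a b => ¬ LexLt a b)} =>
        ((L.val.map Bseg).prod : Ui n))) = ⊤ := by
  constructor
  -- apply the generators to the empty word of the shuffle model
  · refine LinearIndependent.of_comp (UiPBW.orbit n) ?_
    let e : {L : List (List (Fin n)) //
        (∀ l ∈ L, IsSegment l) ∧ L.Chain' (fun a b => ¬ LexLt a b)} →
        {P : List (ℕ × ℕ) // UiPBW.Sorted P} := fun L =>
      ⟨L.1.map UiPBW.enc, UiPBW.sorted_of_isChain ((UiPBW.isChain_enc L.2.1).1 L.2.2)⟩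
    have he : Function.Injective e := fun L L' h =>
      Subtype.ext (UiPBW.map_enc_inj L.2.1 L'.2.1 (congrArg Subtype.val h))
    convert UiPBW.indep_model.comp e he using 1
    funext L
    change UiPBW.orbit n (L.1.map Bseg).prod = _
    rw [UiPBW.prod_Bseg L.2.1]
    refine UiPBW.rep_prodE (fun p hp => ?_) _
    obtain ⟨l, hl, rfl⟩ := List.mem_map.1 hp
    exact UiPBW.enc_lt (L.2.1 l hl)
  · rw [eq_top_iff, ← UiPBW.span_prodE, Submodule.span_le]
    rintro _ ⟨P, hP, rfl⟩
    by_cases h : ∀ p ∈ P, p.1 + p.2 < n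
    · obtain ⟨L, hL, rfl⟩ := UiPBW.exists_map_enc h
      exact Submodule.subset_span ⟨⟨L, hL, (UiPBW.isChain_enc hL).2 hP⟩, UiPBW.prod_Bseg hL⟩
    -- segments leaving the alphabet contribute zero
    · push Not at h
      obtain ⟨p, hp, hpn⟩ := h
      rw [UiPBW.prodE_eq_zero (fun i hi => UiPBW.gen_of_ge hi) hp hpn]
      exact zero_mem _
end

section
/- For 1 ≤ i < j ≤ n+1 write v[i,j] = v_i v_{i+1} ⋯ v_{j−1}. Let (l_1, l_2) be a pair of the form (v[i,j], v[r,s]) with i < r, or of the form (v[r,j], v[r,s]) with j < s. Then the word l_1 l_2 is integral for U = U^ı(sl_{n+1}): B_{l_1} B_{l_2} lies in the ℤ[q, q^{-1}]-span of {B_g : g a good word with g ≼ l_1 l_2}. -/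
/-- The subring `ℤ[q, q⁻¹]` of `ℚ(q)`. -/
noncomputable def LaurentInt : Subring (RatFunc ℚ) :=
  Subring.closure {RatFunc.X, (RatFunc.X)⁻¹}

/-- A word `w` is integral if `B_w` is a `ℤ[q,q⁻¹]`-linear combination of the `B_g` with `g` a
good word satisfying `g ≼ w`. -/
def IsIntegralWord {n : ℕ} {R : Type*} [Ring R] [Algebra (RatFunc ℚ) R]
    (b : Fin n → R) (w : List (Fin n)) : Prop :=
  ∃ (s : Finset (List (Fin n))) (c : List (Fin n) → RatFunc ℚ),
    (∀ g ∈ s, IsGood (RatFunc ℚ) b g ∧ PrecLe g w) ∧ (∀ g ∈ s, c g ∈ LaurentInt) ∧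
    Bword b w = ∑ g ∈ s, c g • Bword b g

/-! ### Tensor powers of the vector representation -/

/-- The variable `q` of `ℚ(q)`. -/
local notation "qq" => (RatFunc.X : RatFunc ℚ)

/-- Functions on configurations of labelled particles. A pair `(m, d)` is a particle at position
`m` which has `d` steps to go. Lists of length `k` carry the `k`-fold tensor power of the
vector representation; the labels `d` are passive and only record the distance to a target. -/
abbrev Conf := List (ℕ × ℤ) → RatFunc ℚ

/-- The eigenvalue of the Cartan element `K_a` on the basis vector `e_m` of the
vector representation. -/
noncomputable def kap (a m : ℕ) : RatFunc ℚ :=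
  if m = a then qq else if m = a + 1 then qq⁻¹ else 1

/-- The action of `B_a` on a tensor power of the vector representation, written on coordinate
functions: the coproduct is `Δ(B_a) = K_a ⊗ B_a + B_a ⊗ 1`, and on the vector
representation itself `B_a` exchanges `e_a` and `e_{a+1}`. -/
noncomputable def opf (a : ℕ) : Conf → Conf
  | _, [] => 0
  | f, (m, d) :: S =>
      kap a m * opf a (fun S' => f ((m, d) :: S')) S
        + (if m = a then f ((m + 1, d - 1) :: S) else 0)
        + (if m = a + 1 then f ((m - 1, d + 1) :: S) else 0)

theorem opf_add (a : ℕ) (f g : Conf) : opf a (f + g) = opf a f + opf a g := by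
  funext S
  induction S generalizing f g with
  | nil => simp [opf]
  | cons x S ih =>
    obtain ⟨m, d⟩ := x
    have := ih (fun S' => f ((m, d) :: S')) (fun S' => g ((m, d) :: S'))
    simp only [Pi.add_apply, opf] at this ⊢
    rw [show (fun S' => f ((m, d) :: S') + g ((m, d) :: S')) =
      (fun S' => f ((m, d) :: S')) + (fun S' => g ((m, d) :: S')) from rfl, this]
    split_ifs <;> ring

theorem opf_smul (a : ℕ) (c : RatFunc ℚ) (f : Conf) : opf a (c • f) = c • opf a f := by
  funext S
  induction S generalizing f with
  | nil => simp [opf]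
  | cons x S ih =>
    obtain ⟨m, d⟩ := x
    have := ih (fun S' => f ((m, d) :: S'))
    simp only [Pi.smul_apply, smul_eq_mul, opf] at this ⊢
    rw [show (fun S' => c * f ((m, d) :: S')) = c • (fun S' => f ((m, d) :: S')) from rfl, this]
    split_ifs <;> ring

/-- The operator `opf a` as a linear endomorphism. -/
noncomputable def op (a : ℕ) : Module.End (RatFunc ℚ) Conf where
  toFun := opf a
  map_add' := opf_add a
  map_smul' := opf_smul a

/-- Freezing the first particle. -/
def sh (x : ℕ × ℤ) (f : Conf) : Conf := fun S => f (x :: S)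

theorem op_nil (a : ℕ) (f : Conf) : op a f [] = 0 := by
  simp [op, opf]

theorem op_cons (a m : ℕ) (d : ℤ) (S : List (ℕ × ℤ)) (f : Conf) :
    op a f ((m, d) :: S) = sh (m, d) (op a f) S := rfl

/-- The recursive formula for the action, as an identity of functions. -/
theorem sh_op (a m : ℕ) (d : ℤ) (f : Conf) :
    sh (m, d) (op a f) = kap a m • op a (sh (m, d) f)
      + (if m = a then (1 : RatFunc ℚ) else 0) • sh (m + 1, d - 1) f
      + (if m = a + 1 then (1 : RatFunc ℚ) else 0) • sh (m - 1, d + 1) f := by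
  funext S
  simp only [sh, op, LinearMap.coe_mk, AddHom.coe_mk, opf, Pi.add_apply, Pi.smul_apply,
    smul_eq_mul, ite_mul, one_mul, zero_mul]
  rfl

theorem sh_op_eq (a : ℕ) (d : ℤ) (f : Conf) :
    sh (a, d) (op a f) = qq • op a (sh (a, d) f) + sh (a + 1, d - 1) f := by
  simp [sh_op, kap]

theorem sh_op_succ (a : ℕ) (d : ℤ) (f : Conf) :
    sh (a + 1, d) (op a f) = qq⁻¹ • op a (sh (a + 1, d) f) + sh (a, d + 1) f := by
  simp [sh_op, kap]

theorem sh_op_ne (a m : ℕ) (d : ℤ) (f : Conf) (h : m ≠ a) (h' : m ≠ a + 1) :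
    sh (m, d) (op a f) = op a (sh (m, d) f) := by
  simp [sh_op, kap, h, h']

theorem op_comm (i j : ℕ) (h : i + 1 < j) (f : Conf) : op i (op j f) = op j (op i f) := by
  funext S
  induction S generalizing f with
  | nil => simp [op_nil]
  | cons x S ih =>
    obtain ⟨m, d⟩ := x
    have key := ih (sh (m, d) f)
    rw [op_cons, op_cons]
    rcases eq_or_ne m i with e1 | e1
    · subst e1
      simp (disch := omega) only [sh_op_eq, sh_op_ne, map_add, map_smul, Pi.add_apply,
        Pi.smul_apply, key]
    rcases eq_or_ne m (i + 1) with e2 | e2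
    · subst e2
      simp (disch := omega) only [sh_op_succ, sh_op_ne, map_add, map_smul, Pi.add_apply,
        Pi.smul_apply, key]
    rcases eq_or_ne m j with e3 | e3
    · subst e3
      simp (disch := omega) only [sh_op_eq, sh_op_ne, map_add, map_smul, Pi.add_apply,
        Pi.smul_apply, key]
    rcases eq_or_ne m (j + 1) with e4 | e4
    · subst e4
      simp (disch := omega) only [sh_op_succ, sh_op_ne, map_add, map_smul, Pi.add_apply,
        Pi.smul_apply, key]
    simp (disch := omega) only [sh_op_ne, key]

theorem op_serre (i j : ℕ) (h : i + 1 = j ∨ j + 1 = i) (f : Conf) :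
    op i (op i (op j f)) + op j (op i (op i f)) = (qq + qq⁻¹) • op i (op j (op i f)) + op j f := by
  have hq : qq ≠ 0 := RatFunc.X_ne_zero
  funext S
  induction S generalizing f with
  | nil => simp [op_nil]
  | cons x S ih =>
    obtain ⟨m, d⟩ := x
    have key := ih (sh (m, d) f)
    simp only [Pi.add_apply, Pi.smul_apply, smul_eq_mul] at key ⊢
    simp only [op_cons]
    rcases h with h | h
    · subst h
      rcases eq_or_ne m i with e1 | e1
      · subst e1
        simp (disch := omega) only [sh_op_eq, sh_op_succ, sh_op_ne, map_add, map_smul, Pi.add_apply,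
          Pi.smul_apply, smul_eq_mul, sub_add_cancel, add_sub_cancel_right]
        field_simp at key ⊢
        linear_combination qq ^ 2 * key
      rcases eq_or_ne m (i + 1) with e2 | e2
      · subst e2
        simp (disch := omega) only [sh_op_eq, sh_op_succ, sh_op_ne, map_add, map_smul, Pi.add_apply,
          Pi.smul_apply, smul_eq_mul, sub_add_cancel, add_sub_cancel_right]
        field_simp at key ⊢
        linear_combination key
      rcases eq_or_ne m (i + 1 + 1) with e3 | e3
      · subst e3
        simp (disch := omega) only [sh_op_eq, sh_op_succ, sh_op_ne, map_add, map_smul, Pi.add_apply,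
          Pi.smul_apply, smul_eq_mul, sub_add_cancel, add_sub_cancel_right]
        field_simp at key ⊢
        linear_combination key
      simp (disch := omega) only [sh_op_ne]
      linear_combination key
    · subst h
      rcases eq_or_ne m j with e1 | e1
      · subst e1
        simp (disch := omega) only [sh_op_eq, sh_op_succ, sh_op_ne, map_add, map_smul, Pi.add_apply,
          Pi.smul_apply, smul_eq_mul, sub_add_cancel, add_sub_cancel_right]
        field_simp at key ⊢
        linear_combination qq * key
      rcases eq_or_ne m (j + 1) with e2 | e2
      · subst e2
        simp (disch := omega) only [sh_op_eq, sh_op_succ, sh_op_ne, map_add, map_smul, Pi.add_apply,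
          Pi.smul_apply, smul_eq_mul, sub_add_cancel, add_sub_cancel_right]
        field_simp at key ⊢
        linear_combination qq ^ 2 * key
      rcases eq_or_ne m (j + 1 + 1) with e3 | e3
      · subst e3
        simp (disch := omega) only [sh_op_eq, sh_op_succ, sh_op_ne, map_add, map_smul, Pi.add_apply,
          Pi.smul_apply, smul_eq_mul, sub_add_cancel, add_sub_cancel_right]
        field_simp at key ⊢
        linear_combination key
      simp (disch := omega) only [sh_op_ne]
      linear_combination key

/-- The representation of `U^ı(sl_{n+1})` given by the operators `op`. -/
noncomputable def rep (n : ℕ) : Ui n →ₐ[RatFunc ℚ] Module.End (RatFunc ℚ) Conf :=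
  RingQuot.liftAlgHom (RatFunc ℚ)
    ⟨FreeAlgebra.lift (RatFunc ℚ) (fun i : Fin n => op (i : ℕ)), by
      intro x y h
      cases h with
      | comm i j h =>
        ext1 f
        simpa using op_comm i j h f
      | serre i j h =>
        ext1 f
        simpa [mul_assoc] using op_serre i j h f⟩

theorem rep_Bgen (n : ℕ) (i : Fin n) : rep n (Bgen n i) = op (i : ℕ) := by
  simp [rep, Bgen]

/-- The product of the operators `op` along a word. -/
noncomputable def opw : List ℕ → Module.End (RatFunc ℚ) Conf
  | [] => 1
  | a :: w => op a * opw w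

theorem rep_Bword (n : ℕ) (w : List (Fin n)) :
    rep n (Bword (Bgen n) w) = opw (w.map Fin.val) := by
  induction w with
  | nil => simp [Bword, opw]
  | cons a w ih =>
    have : Bword (Bgen n) (a :: w) = Bgen n a * Bword (Bgen n) w := by simp [Bword]
    rw [this, map_mul, ih, rep_Bgen]
    rfl

/-! ### Positivity in `ℚ(q)` -/

/-- Elements of `ℚ[q, q⁻¹]` whose value at `q = 1` is positive. -/
def QPos (x : RatFunc ℚ) : Prop :=
  ∃ (N : ℕ) (p : Polynomial ℚ), qq ^ N * x = algebraMap _ _ p ∧ 0 < p.eval 1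

theorem QPos.ne_zero {x : RatFunc ℚ} (h : QPos x) : x ≠ 0 := by
  rintro rfl
  obtain ⟨N, p, h, hp⟩ := h
  rw [mul_zero, eq_comm, map_eq_zero_iff _ (RatFunc.algebraMap_injective ℚ)] at h
  simp [h] at hp

theorem QPos.one : QPos 1 := ⟨0, 1, by simp, by simp⟩

theorem QPos.add {x y : RatFunc ℚ} (hx : QPos x) (hy : QPos y) : QPos (x + y) := by
  obtain ⟨N, p, h, hp⟩ := hx
  obtain ⟨N', p', h', hp'⟩ := hy
  refine ⟨N + N', Polynomial.X ^ N' * p + Polynomial.X ^ N * p', ?_, by simpa using by positivity⟩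
  simp only [map_add, map_mul, map_pow, ← h, ← h', RatFunc.algebraMap_X]
  ring

theorem QPos.mul {x y : RatFunc ℚ} (hx : QPos x) (hy : QPos y) : QPos (x * y) := by
  obtain ⟨N, p, h, hp⟩ := hx
  obtain ⟨N', p', h', hp'⟩ := hy
  refine ⟨N + N', p * p', ?_, by simpa using by positivity⟩
  simp only [map_mul, ← h, ← h']
  ring

theorem QPos.kap (a m : ℕ) : QPos (kap a m) := by
  unfold _root_.kap
  split_ifs
  · exact ⟨0, Polynomial.X, by simp, by simp⟩
  · exact ⟨1, 1, by simp [RatFunc.X_ne_zero], by simp⟩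
  · exact QPos.one

/-- Zero, or positive at `q = 1`. -/
def QNonneg (x : RatFunc ℚ) : Prop := x = 0 ∨ QPos x

theorem QNonneg.add {x y : RatFunc ℚ} (hx : QNonneg x) (hy : QNonneg y) : QNonneg (x + y) := by
  rcases hx with rfl | hx
  · simpa using hy
  rcases hy with rfl | hy
  · rw [add_zero]
    exact Or.inr hx
  exact Or.inr (hx.add hy)

theorem QNonneg.mul_pos {x y : RatFunc ℚ} (hx : QPos x) (hy : QNonneg y) : QNonneg (x * y) := by
  rcases hy with rfl | hy
  · simp [QNonneg]
  exact Or.inr (hx.mul hy)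

theorem QPos.add_nonneg {x y : RatFunc ℚ} (hx : QPos x) (hy : QNonneg y) : QPos (x + y) := by
  rcases hy with rfl | hy
  · simpa using hx
  exact hx.add hy

theorem QNonneg.add_pos {x y : RatFunc ℚ} (hx : QNonneg x) (hy : QPos y) : QPos (x + y) := by
  rw [add_comm]
  exact hy.add_nonneg hx

/-! ### Leading behaviour of the action -/

theorem op_apply_cons (a m : ℕ) (d : ℤ) (S : List (ℕ × ℤ)) (f : Conf) :
    op a f ((m, d) :: S) = kap a m * op a (sh (m, d) f) S
      + (if m = a then f ((m + 1, d - 1) :: S) else 0)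
      + (if m = a + 1 then f ((m - 1, d + 1) :: S) else 0) := rfl

/-- If no configuration reachable from `S` by one move of a particle across the edge `a`
carries a nonzero value of `f`, then `B_a f` vanishes at `S`. -/
theorem op_eq_zero (a : ℕ) (S : List (ℕ × ℤ)) (f : Conf)
    (hup : ∀ S₁ d S₂, S = S₁ ++ (a, d) :: S₂ → f (S₁ ++ (a + 1, d - 1) :: S₂) = 0)
    (hdn : ∀ S₁ d S₂, S = S₁ ++ (a + 1, d) :: S₂ → f (S₁ ++ (a, d + 1) :: S₂) = 0) :
    op a f S = 0 := by
  induction S generalizing f with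
  | nil => exact op_nil a f
  | cons x S ih =>
    obtain ⟨m, d⟩ := x
    rw [op_apply_cons, ih (sh (m, d) f)]
    · have h1 : (if m = a then f ((m + 1, d - 1) :: S) else 0) = 0 := by
        split_ifs with h
        · subst h
          exact hup [] d S rfl
        · rfl
      have h2 : (if m = a + 1 then f ((m - 1, d + 1) :: S) else 0) = 0 := by
        split_ifs with h
        · subst h
          exact hdn [] d S rfl
        · rfl
      rw [h1, h2]
      simp
    · intro S₁ d' S₂ h
      exact hup ((m, d) :: S₁) d' S₂ (by simp [h])
    · intro S₁ d' S₂ h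
      exact hdn ((m, d) :: S₁) d' S₂ (by simp [h])

theorem op_nonneg (a : ℕ) (S : List (ℕ × ℤ)) (f : Conf)
    (hup : ∀ S₁ d S₂, S = S₁ ++ (a, d) :: S₂ → QNonneg (f (S₁ ++ (a + 1, d - 1) :: S₂)))
    (hdn : ∀ S₁ d S₂, S = S₁ ++ (a + 1, d) :: S₂ → f (S₁ ++ (a, d + 1) :: S₂) = 0) :
    QNonneg (op a f S) := by
  induction S generalizing f with
  | nil => exact Or.inl (op_nil a f)
  | cons x S ih =>
    obtain ⟨m, d⟩ := x
    rw [op_apply_cons]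
    have h0 : QNonneg (op a (sh (m, d) f) S) := by
      apply ih
      · intro S₁ d' S₂ h
        exact hup ((m, d) :: S₁) d' S₂ (by simp [h])
      · intro S₁ d' S₂ h
        exact hdn ((m, d) :: S₁) d' S₂ (by simp [h])
    refine ((QNonneg.mul_pos (QPos.kap a m) h0).add ?_).add ?_
    · split_ifs with h
      · subst h
        exact hup [] d S rfl
      · exact Or.inl rfl
    · split_ifs with h
      · subst h
        exact Or.inl (hdn [] d S rfl)
      · exact Or.inl rfl

theorem op_pos (a : ℕ) (S₁ : List (ℕ × ℤ)) (d : ℤ) (S₂ : List (ℕ × ℤ)) (f : Conf)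
    (hup : ∀ T₁ d' T₂, S₁ ++ (a, d) :: S₂ = T₁ ++ (a, d') :: T₂ →
      QNonneg (f (T₁ ++ (a + 1, d' - 1) :: T₂)))
    (hdn : ∀ T₁ d' T₂, S₁ ++ (a, d) :: S₂ = T₁ ++ (a + 1, d') :: T₂ →
      f (T₁ ++ (a, d' + 1) :: T₂) = 0)
    (hpos : QPos (f (S₁ ++ (a + 1, d - 1) :: S₂))) :
    QPos (op a f (S₁ ++ (a, d) :: S₂)) := by
  induction S₁ generalizing f with
  | nil =>
    rw [List.nil_append, op_apply_cons]
    have h0 : QNonneg (op a (sh (a, d) f) S₂) := by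
      apply op_nonneg
      · intro T₁ d' T₂ h
        exact hup ((a, d) :: T₁) d' T₂ (by simp [h])
      · intro T₁ d' T₂ h
        exact hdn ((a, d) :: T₁) d' T₂ (by simp [h])
    refine (QNonneg.add_pos (QNonneg.mul_pos (QPos.kap a a) h0) ?_).add_nonneg ?_
    · simpa using hpos
    · exact Or.inl (by simp)
  | cons x S₁ ih =>
    obtain ⟨m, e⟩ := x
    rw [List.cons_append, op_apply_cons]
    have h0 : QPos (op a (sh (m, e) f) (S₁ ++ (a, d) :: S₂)) := by
      apply ih
      · intro T₁ d' T₂ h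
        exact hup ((m, e) :: T₁) d' T₂ (by simp [h])
      · intro T₁ d' T₂ h
        exact hdn ((m, e) :: T₁) d' T₂ (by simp [h])
      · exact hpos
    refine (((QPos.kap a m).mul h0).add_nonneg ?_).add_nonneg ?_
    · split_ifs with h
      · subst h
        exact hup [] e _ rfl
      · exact Or.inl rfl
    · split_ifs with h
      · subst h
        exact Or.inl (hdn [] e _ rfl)
      · exact Or.inl rfl

/-- The total number of steps that the particles still have to make. -/
def stepsLeft (S : List (ℕ × ℤ)) : ℕ := (S.map fun x => x.2.natAbs).sum

/-- The vector with value `1` where every particle has reached its target, and `0` elsewhere. -/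
noncomputable def f0 : Conf := fun S => if stepsLeft S = 0 then 1 else 0

theorem stepsLeft_append_cons (S₁ S₂ : List (ℕ × ℤ)) (m : ℕ) (d : ℤ) :
    stepsLeft (S₁ ++ (m, d) :: S₂) = stepsLeft S₁ + d.natAbs + stepsLeft S₂ := by
  simp [stepsLeft, add_assoc]

/-- Each letter moves one particle by one step, so short words cannot reach the target. -/
theorem opw_eq_zero (w : List ℕ) (S : List (ℕ × ℤ)) (h : w.length < stepsLeft S) :
    opw w f0 S = 0 := by
  induction w generalizing S with
  | nil =>
    have : stepsLeft S ≠ 0 := by simp at h; omega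
    simp [opw, f0, this]
  | cons a w ih =>
    simp only [List.length_cons] at h
    refine op_eq_zero a S (opw w f0) ?_ ?_
    · rintro S₁ d S₂ rfl
      apply ih
      rw [stepsLeft_append_cons] at h ⊢
      omega
    · rintro S₁ d S₂ rfl
      apply ih
      rw [stepsLeft_append_cons] at h ⊢
      omega

/-- All labels are nonnegative. -/
def NN (S : List (ℕ × ℤ)) : Prop := ∀ x ∈ S, 0 ≤ x.2

theorem opw_dn (w : List ℕ) (a : ℕ) (S₁ : List (ℕ × ℤ)) (d : ℤ) (S₂ : List (ℕ × ℤ))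
    (hN : NN (S₁ ++ (a + 1, d) :: S₂))
    (h : w.length + 1 = stepsLeft (S₁ ++ (a + 1, d) :: S₂)) :
    opw w f0 (S₁ ++ (a, d + 1) :: S₂) = 0 := by
  apply opw_eq_zero
  have : 0 ≤ d := hN (a + 1, d) (by simp)
  rw [stepsLeft_append_cons] at h ⊢
  omega

theorem opw_up_zero (w : List ℕ) (a : ℕ) (S₁ : List (ℕ × ℤ)) (d : ℤ) (S₂ : List (ℕ × ℤ))
    (hd : d ≤ 0) (h : w.length + 1 = stepsLeft (S₁ ++ (a, d) :: S₂)) :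
    opw w f0 (S₁ ++ (a + 1, d - 1) :: S₂) = 0 := by
  apply opw_eq_zero
  rw [stepsLeft_append_cons] at h ⊢
  omega

theorem NN.up {a : ℕ} {S₁ : List (ℕ × ℤ)} {d : ℤ} {S₂ : List (ℕ × ℤ)}
    (hN : NN (S₁ ++ (a, d) :: S₂)) (hd : 0 < d) : NN (S₁ ++ (a + 1, d - 1) :: S₂) := by
  intro x hx
  simp only [List.mem_append, List.mem_cons] at hx
  rcases hx with hx | rfl | hx
  · exact hN x (by simp [hx])
  · simp; omega
  · exact hN x (by simp [hx])

theorem stepsLeft_up {w : List ℕ} {a : ℕ} {S₁ : List (ℕ × ℤ)} {d : ℤ} {S₂ : List (ℕ × ℤ)}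
    (hd : 0 < d) (h : w.length + 1 = stepsLeft (S₁ ++ (a, d) :: S₂)) :
    w.length = stepsLeft (S₁ ++ (a + 1, d - 1) :: S₂) := by
  rw [stepsLeft_append_cons] at h ⊢
  omega

theorem opw_nonneg (w : List ℕ) (S : List (ℕ × ℤ)) (hN : NN S) (h : w.length = stepsLeft S) :
    QNonneg (opw w f0 S) := by
  induction w generalizing S with
  | nil =>
    have h' : stepsLeft S = 0 := by simpa using h.symm
    exact Or.inr (by simpa [opw, f0, h'] using QPos.one)
  | cons a w ih =>
    refine op_nonneg a S (opw w f0) ?_ ?_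
    · rintro S₁ d S₂ rfl
      rcases le_or_gt d 0 with hd | hd
      · exact Or.inl (opw_up_zero w a S₁ d S₂ hd h)
      · exact ih _ (hN.up hd) (stepsLeft_up hd h)
    · rintro S₁ d S₂ rfl
      exact opw_dn w a S₁ d S₂ hN h

/-! ### Descending products of segments -/

/-- The segment word `a, a+1, …, a+d-1` encoded by a pair `(a, d)` (empty for `d ≤ 0`). -/
def segw (x : ℕ × ℤ) : List ℕ := List.range' x.1 x.2.toNat

/-- The word obtained by concatenating a list of segments. -/
def cat (T : List (ℕ × ℤ)) : List ℕ := T.flatMap segw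

/-- The lexicographic order on segment words, in terms of start and length. -/
def SegGe (x y : ℕ × ℤ) : Prop := y.1 < x.1 ∨ (y.1 = x.1 ∧ y.2 ≤ x.2)

/-- A weakly decreasing list of nonempty segments. -/
def Desc (T : List (ℕ × ℤ)) : Prop := (∀ x ∈ T, 0 < x.2) ∧ T.Pairwise SegGe

/-- The particles that have not reached their target. -/
def act (S : List (ℕ × ℤ)) : List (ℕ × ℤ) := S.filter fun x => 0 < x.2

theorem segw_pos (a : ℕ) (d : ℤ) (h : 0 < d) : segw (a, d) = a :: segw (a + 1, d - 1) := by
  obtain ⟨k, rfl⟩ : ∃ k : ℕ, d = k + 1 := ⟨(d - 1).toNat, by omega⟩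
  simp [segw, List.range'_succ]

theorem segw_nonpos (a : ℕ) (d : ℤ) (h : d ≤ 0) : segw (a, d) = [] := by
  simp [segw, Int.toNat_of_nonpos h]

theorem cat_cons (x : ℕ × ℤ) (T : List (ℕ × ℤ)) : cat (x :: T) = segw x ++ cat T := rfl

theorem cat_append (T T' : List (ℕ × ℤ)) : cat (T ++ T') = cat T ++ cat T' := by
  simp [cat]

theorem cat_act_singleton (x : ℕ × ℤ) : cat (act [x]) = segw x := by
  obtain ⟨a, d⟩ := x
  by_cases h : 0 < d
  · simp [act, h, cat]
  · simp [act, h, cat, segw_nonpos a d (by omega)]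

theorem length_cat (T : List (ℕ × ℤ)) (h : NN T) : (cat T).length = stepsLeft T := by
  induction T with
  | nil => rfl
  | cons x T ih =>
    have h1 := ih fun y hy => h y (by simp [hy])
    have h2 := h x (by simp)
    rw [cat_cons, List.length_append, h1]
    simp only [segw, List.length_range', stepsLeft, List.map_cons, List.sum_cons]
    omega

theorem stepsLeft_act (S : List (ℕ × ℤ)) (h : NN S) : stepsLeft (act S) = stepsLeft S := by
  induction S with
  | nil => rfl
  | cons x T ih =>
    have h1 := ih fun y hy => h y (by simp [hy])
    have h2 := h x (by simp)
    simp only [act, stepsLeft, List.map_cons, List.sum_cons] at h1 ⊢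
    by_cases h0 : 0 < x.2
    · simp [h0, h1]
    · simp [h0, h1]
      omega

theorem stepsLeft_perm {S T : List (ℕ × ℤ)} (h : S.Perm T) : stepsLeft S = stepsLeft T :=
  (h.map _).sum_eq

theorem Desc.nn {T : List (ℕ × ℤ)} (h : Desc T) : NN T := fun x hx => (h.1 x hx).le

theorem length_cat_perm {S T : List (ℕ × ℤ)} (hT : Desc T) (hN : NN S) (h : T.Perm (act S)) :
    (cat T).length = stepsLeft S := by
  rw [length_cat T hT.nn, stepsLeft_perm h, stepsLeft_act S hN]

theorem act_append (S S' : List (ℕ × ℤ)) : act (S ++ S') = act S ++ act S' := by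
  simp [act]

theorem act_split (S₁ S₂ : List (ℕ × ℤ)) (x : ℕ × ℤ) :
    act (S₁ ++ x :: S₂) = act S₁ ++ (act [x] ++ act S₂) := by
  rw [← act_append, ← act_append]
  rfl

/-- Moving the particle `(a, d)` corresponds to removing the first letter of its segment. -/
theorem perm_up {S₁ S₂ T₁ T₂ : List (ℕ × ℤ)} {a : ℕ} {d : ℤ} (hd : 0 < d)
    (h : (T₁ ++ (a, d) :: T₂).Perm (act (S₁ ++ (a, d) :: S₂))) :
    (act [(a + 1, d - 1)] ++ (T₁ ++ T₂)).Perm (act (S₁ ++ (a + 1, d - 1) :: S₂)) := by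
  have h1 : (T₁ ++ T₂).Perm (act S₁ ++ act S₂) := by
    rw [act_split, show act [(a, d)] = [(a, d)] by simp [act, hd]] at h
    have := (List.perm_middle.symm.trans h).trans List.perm_middle
    exact this.cons_inv
  rw [act_split]
  refine (h1.append_left _).trans ?_
  rw [← List.append_assoc, ← List.append_assoc]
  exact List.perm_append_comm.append_right _

theorem desc_up {T₁ T₂ : List (ℕ × ℤ)} {a : ℕ} {d : ℤ} (h : Desc (T₁ ++ (a, d) :: T₂))
    (hle : ∀ x ∈ T₁, x.1 ≤ a) : Desc (act [(a + 1, d - 1)] ++ (T₁ ++ T₂)) := by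
  obtain ⟨hp, hs⟩ := h
  have hs' := hs
  rw [List.pairwise_append, List.pairwise_cons] at hs
  refine ⟨?_, ?_⟩
  · intro x hx
    rw [List.mem_append, List.mem_append] at hx
    rcases hx with hx | hx | hx
    · simpa using (List.mem_filter.1 hx).2
    · exact hp x (by simp [hx])
    · exact hp x (by simp [hx])
  · rw [List.pairwise_append]
    refine ⟨(List.pairwise_singleton _ _).filter _, ?_, ?_⟩
    · rw [List.pairwise_append]
      exact ⟨hs.1, hs.2.1.2, fun x hx y hy => hs.2.2 x hx y (by simp [hy])⟩
    · intro x hx y hy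
      have hx' : x = (a + 1, d - 1) := by simpa using (List.mem_filter.1 hx).1
      subst hx'
      left
      rw [List.mem_append] at hy
      rcases hy with hy | hy
      · have := hle y hy
        simp; omega
      · have := hs.2.1.1 y hy
        simp [SegGe] at this ⊢
        omega

/-- The leading matrix coefficient of the decreasing word itself is nonzero. -/
theorem opw_cat_pos (w : List ℕ) (S T : List (ℕ × ℤ)) (hN : NN S) (hT : Desc T)
    (hp : T.Perm (act S)) (hw : w = cat T) : QPos (opw w f0 S) := by
  induction w generalizing S T with
  | nil =>
    have h := length_cat_perm hT hN hp
    rw [← hw] at h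
    have h' : stepsLeft S = 0 := by simpa using h.symm
    simpa [opw, f0, h'] using QPos.one
  | cons b w ih =>
    have hlen : w.length + 1 = stepsLeft S := by
      rw [← length_cat_perm hT hN hp, ← hw]
      rfl
    cases T with
    | nil => simp [cat] at hw
    | cons x T =>
      obtain ⟨a, d⟩ := x
      have hd : 0 < d := hT.1 (a, d) (by simp)
      rw [cat_cons, segw_pos a d hd, List.cons_append, List.cons.injEq] at hw
      obtain ⟨rfl, hw⟩ := hw
      have hmem : (b, d) ∈ S := by
        have : (b, d) ∈ act S := hp.subset (by simp)
        exact (List.mem_filter.1 this).1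
      obtain ⟨S₁, S₂, rfl⟩ := List.append_of_mem hmem
      refine op_pos b S₁ d S₂ (opw w f0) ?_ ?_ ?_
      · intro T₁ d' T₂ h
        rw [h] at hN hlen
        rcases le_or_gt d' 0 with hd' | hd'
        · exact Or.inl (opw_up_zero w b T₁ d' T₂ hd' hlen)
        · exact opw_nonneg w _ (hN.up hd') (stepsLeft_up hd' hlen)
      · intro T₁ d' T₂ h
        rw [h] at hN hlen
        exact opw_dn w b T₁ d' T₂ hN hlen
      · have hp' := perm_up (T₁ := []) (T₂ := T) hd hp
        refine ih _ _ (hN.up hd) (desc_up (T₁ := []) hT (by simp)) hp' ?_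
        rw [cat_append, cat_act_singleton, hw]
        rfl

theorem cons_lt_of_lt {a b : ℕ} (h : a < b) (x y : List ℕ) : a :: x < b :: y :=
  List.Lex.rel h

theorem cons_le_of_le {x y : List ℕ} (a : ℕ) (h : x ≤ y) : a :: x ≤ a :: y := by
  rcases h.eq_or_lt with rfl | h
  · exact le_rfl
  · exact le_of_lt (List.Lex.cons h)

theorem append_le_append_of_le {x y : List ℕ} (u : List ℕ) (h : x ≤ y) : u ++ x ≤ u ++ y := by
  induction u with
  | nil => exact h
  | cons a u ih => exact cons_le_of_le a ih

/-- Among two segments with the same start, placing the longer one first gives the larger word. -/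
theorem segw_swap (a : ℕ) (d e : ℤ) (hd : 0 < d) (h : d ≤ e) (u : List ℕ) :
    segw (a, d) ++ (segw (a, e) ++ u) ≤ segw (a, e) ++ (segw (a, d) ++ u) := by
  rcases h.eq_or_lt with rfl | h
  · exact le_rfl
  have h1 : segw (a, e) = segw (a, d) ++ segw (a + d.toNat, e - d) := by
    obtain ⟨k, rfl⟩ : ∃ k : ℕ, d = k := ⟨d.toNat, by omega⟩
    obtain ⟨l, rfl⟩ : ∃ l : ℕ, e = k + l := ⟨(e - k).toNat, by omega⟩
    have : (k + l : ℤ).toNat = k + l := by omega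
    simp only [segw, this, Int.toNat_natCast, add_sub_cancel_left]
    rw [List.range'_append_1]
  nth_rewrite 2 [h1]
  rw [List.append_assoc]
  apply append_le_append_of_le
  rw [segw_pos a e (by omega), segw_pos (a + d.toNat) _ (by omega)]
  exact (cons_lt_of_lt (by omega) _ _).le

theorem segw_cat_le (a : ℕ) (d : ℤ) (hd : 0 < d) (T : List (ℕ × ℤ))
    (h : ∀ x ∈ T, x.1 = a ∧ d ≤ x.2) (u : List ℕ) :
    segw (a, d) ++ (cat T ++ u) ≤ cat T ++ (segw (a, d) ++ u) := by
  induction T with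
  | nil => exact le_rfl
  | cons x T ih =>
    obtain ⟨b, e⟩ := x
    obtain ⟨rfl, h2⟩ := h (b, e) (by simp)
    rw [cat_cons, List.append_assoc, List.append_assoc]
    exact (segw_swap b d e hd h2 _).trans
      (append_le_append_of_le _ (ih fun x hx => h x (by simp [hx])))

/-- Any word with a nonzero leading matrix coefficient is a shuffle of the segments of `T`, hence
at most their decreasing concatenation. -/
theorem le_cat_of_ne_zero (w : List ℕ) (S T : List (ℕ × ℤ)) (hN : NN S) (hT : Desc T)
    (hp : T.Perm (act S)) (hlen : w.length = stepsLeft S) (h0 : opw w f0 S ≠ 0) :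
    w ≤ cat T := by
  induction w generalizing S T with
  | nil => exact le_of_not_gt (List.not_lt_nil _)
  | cons a w ih =>
    rw [List.length_cons] at hlen
    obtain ⟨S₁, d, S₂, rfl, hne⟩ : ∃ S₁ d S₂, S = S₁ ++ (a, d) :: S₂ ∧
        opw w f0 (S₁ ++ (a + 1, d - 1) :: S₂) ≠ 0 := by
      by_contra! hcon
      refine h0 (op_eq_zero a S (opw w f0) hcon ?_)
      rintro S₁ d S₂ rfl
      exact opw_dn w a S₁ d S₂ hN hlen
    have hd : 0 < d := by
      by_contra! hd
      exact hne (opw_up_zero w a S₁ d S₂ hd hlen)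
    have hmem : (a, d) ∈ T := hp.symm.subset (by simp [act, hd])
    obtain ⟨T₁, T₂, rfl⟩ := List.append_of_mem hmem
    have hs := hT.2
    rw [List.pairwise_append, List.pairwise_cons] at hs
    by_cases hle : ∀ x ∈ T₁, x.1 ≤ a
    · have hw := ih _ _ (hN.up hd) (desc_up hT hle) (perm_up hd hp) (stepsLeft_up hd hlen) hne
      rw [cat_append, cat_append, cat_act_singleton] at hw
      calc a :: w ≤ a :: (segw (a + 1, d - 1) ++ (cat T₁ ++ cat T₂)) := by
            exact cons_le_of_le a hw
        _ = segw (a, d) ++ (cat T₁ ++ cat T₂) := by rw [segw_pos a d hd, List.cons_append]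
        _ ≤ _ := by
          rw [cat_append, cat_cons]
          refine segw_cat_le a d hd T₁ ?_ _
          intro x hx
          have h1 := hs.2.2 x hx (a, d) (by simp)
          have h2 := hle x hx
          simp only [SegGe] at h1
          omega
    · -- the first segment of `T` starts with a letter larger than `a`
      cases T₁ with
      | nil => simp at hle
      | cons y T₁ =>
        obtain ⟨b, e⟩ := y
        have hb : a < b := by
          push Not at hle
          obtain ⟨x, hx, hax⟩ := hle
          rcases List.mem_cons.1 hx with rfl | hx
          · exact hax
          · have := (List.pairwise_cons.1 hs.1).1 x hx
            simp only [SegGe] at this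
            omega
        have he : 0 < e := hT.1 (b, e) (by simp)
        rw [List.cons_append, cat_cons, segw_pos b e he, List.cons_append]
        exact (cons_lt_of_lt hb _ _).le

/-! ### Good words -/

theorem lexLt_map {n : ℕ} {x y : List (Fin n)} (h : LexLt x y) :
    x.map Fin.val < y.map Fin.val := by
  unfold LexLt at h
  induction h with
  | nil => exact List.Lex.nil
  | cons _ ih => exact List.Lex.cons ih
  | rel h => exact List.Lex.rel h

/-- Decreasing products of segments are good: on the matrix coefficient of the tensor power of
the vector representation attached to the segments, all smaller words vanish. -/
theorem isGood_of_desc {n : ℕ} (g : List (Fin n)) (T : List (ℕ × ℤ)) (hT : Desc T)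
    (hg : g.map Fin.val = cat T) : IsGood (RatFunc ℚ) (Bgen n) g := by
  intro hmem
  have hact : act T = T := List.filter_eq_self.2 fun x hx => by simpa using hT.1 x hx
  have hperm : T.Perm (act T) := by rw [hact]
  have hlen : g.length = stepsLeft T := by
    rw [← length_cat T hT.nn, ← hg, List.length_map]
  let φ : Ui n →ₗ[RatFunc ℚ] RatFunc ℚ :=
    (LinearMap.proj T ∘ₗ LinearMap.applyₗ f0) ∘ₗ (rep n).toLinearMap
  have hφ : ∀ w : List (Fin n), φ (Bword (Bgen n) w) = opw (w.map Fin.val) f0 T := by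
    intro w
    rw [← rep_Bword]
    rfl
  have hle : Submodule.span (RatFunc ℚ) (Bword (Bgen n) '' {w | PrecLt w g}) ≤
      LinearMap.ker φ := by
    rw [Submodule.span_le]
    rintro _ ⟨w, hw, rfl⟩
    rw [SetLike.mem_coe, LinearMap.mem_ker, hφ]
    rcases hw with hw | ⟨hw, hlt⟩
    · exact opw_eq_zero _ _ (by rw [List.length_map]; omega)
    · by_contra hne
      have h1 := le_cat_of_ne_zero _ T T hT.nn hT hperm
        (by rw [List.length_map]; omega) hne
      rw [← hg] at h1
      exact absurd (lexLt_map hlt) (not_lt_of_ge h1)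
  have h0 : φ (Bword (Bgen n) g) = 0 := hle hmem
  rw [hφ] at h0
  exact (opw_cat_pos _ T T hT.nn hT hperm hg).ne_zero h0

/-! ### Relations between segment products -/

/-- The quantum integer `[2] = q + q⁻¹`. -/
local notation "tt" => (qq + qq⁻¹ : RatFunc ℚ)

theorem tt_mem : tt ∈ LaurentInt :=
  LaurentInt.add_mem (Subring.subset_closure (by simp)) (Subring.subset_closure (by simp))

theorem tt_ne_zero : tt ≠ 0 := by
  have h : QPos tt := by
    have h1 := QPos.kap 0 0
    have h2 := QPos.kap 0 1
    simp only [kap, if_true] at h1 h2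
    exact h1.add (by simpa using h2)
  exact h.ne_zero

/-- If `Y` and `Z` commute and both satisfy the (inhomogeneous) Serre relation with `B`, then `B`
commutes with `YBZ - ZBY`. -/
theorem serre_commutator {R : Type*} [Ring R] [Algebra (RatFunc ℚ) R] (Y Z B : R)
    (hYZ : Y * Z = Z * Y)
    (hY : B * B * Y + Y * B * B = tt • (B * Y * B) + Y)
    (hZ : B * B * Z + Z * B * B = tt • (B * Z * B) + Z) :
    Y * B * Z * B = B * Y * B * Z + Z * B * Y * B - B * Z * B * Y := by
  have hY' : tt • (B * Y * B) = B * B * Y + Y * B * B - Y := by rw [hY]; abel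
  have hZ' : tt • (B * Z * B) = B * B * Z + Z * B * B - Z := by rw [hZ]; abel
  have key : tt • (Y * B * Z * B) = tt • (B * Y * B * Z + Z * B * Y * B - B * Z * B * Y) := by
    have e1 : tt • (Y * B * Z * B) = Y * (tt • (B * Z * B)) := by
      rw [mul_smul_comm]; simp only [mul_assoc]
    have e2 : tt • (B * Y * B * Z) = (tt • (B * Y * B)) * Z := by
      rw [smul_mul_assoc]
    have e3 : tt • (Z * B * Y * B) = Z * (tt • (B * Y * B)) := by
      rw [mul_smul_comm]; simp only [mul_assoc]
    have e4 : tt • (B * Z * B * Y) = (tt • (B * Z * B)) * Y := by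
      rw [smul_mul_assoc]
    rw [smul_sub, smul_add, e1, e2, e3, e4, hY', hZ']
    have h1 : Y * (Z * B * B) = Z * (Y * B * B) := by
      simp only [← mul_assoc, hYZ]
    have h2 : B * B * Y * Z = B * B * Z * Y := by
      simp only [mul_assoc, hYZ]
    simp only [mul_add, mul_sub, add_mul, sub_mul, h1, h2, hYZ]
    simp only [mul_assoc]
    abel
  exact smul_right_injective R tt_ne_zero key

/-- The generators of `U^ı(sl_{n+1})` indexed by natural numbers; `bn n a` is the junk value `0`
for `a ≥ n`. -/
noncomputable def bn (n a : ℕ) : Ui n := if h : a < n then Bgen n ⟨a, h⟩ else 0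

/-- The product of generators along a word in natural numbers. -/
noncomputable def bw (n : ℕ) (w : List ℕ) : Ui n := (w.map (bn n)).prod

/-- The word uses only the letters `0, …, n-1`. -/
def Lt (n : ℕ) (w : List ℕ) : Prop := ∀ a ∈ w, a < n

theorem bw_append (n : ℕ) (u v : List ℕ) : bw n (u ++ v) = bw n u * bw n v := by
  simp [bw]

theorem bw_cons (n a : ℕ) (v : List ℕ) : bw n (a :: v) = bn n a * bw n v := by
  simp [bw]

theorem bw_singleton (n a : ℕ) : bw n [a] = bn n a := by
  simp [bw]

theorem bw_map (n : ℕ) (w : List (Fin n)) : bw n (w.map Fin.val) = Bword (Bgen n) w := by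
  simp only [bw, Bword, List.map_map]
  congr 1
  apply List.map_congr_left
  intro a _
  simp [bn]

theorem Lt.append {n : ℕ} {u v : List ℕ} (hu : Lt n u) (hv : Lt n v) : Lt n (u ++ v) := by
  intro a ha
  rcases List.mem_append.1 ha with h | h
  exacts [hu a h, hv a h]

theorem Lt.of_append {n : ℕ} {u v : List ℕ} (h : Lt n (u ++ v)) : Lt n u ∧ Lt n v :=
  ⟨fun a ha => h a (by simp [ha]), fun a ha => h a (by simp [ha])⟩

theorem Lt.cons {n a : ℕ} {v : List ℕ} (ha : a < n) (hv : Lt n v) : Lt n (a :: v) := by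
  intro b hb
  rcases List.mem_cons.1 hb with rfl | h
  exacts [ha, hv b h]

theorem Lt.nil {n : ℕ} : Lt n [] := by
  intro b hb
  simp at hb

theorem Lt.range' {n i l : ℕ} (h : i + l ≤ n) : Lt n (List.range' i l) := by
  intro a ha
  rw [List.mem_range'_1] at ha
  omega

theorem bn_comm {n i j : ℕ} (h : i + 1 < j) (hj : j < n) : Commute (bn n i) (bn n j) := by
  have hi : i < n := by omega
  simp only [bn, hi, hj, dif_pos]
  have := RingQuot.mkAlgHom_rel (RatFunc ℚ) (UiRel.comm (n := n) ⟨i, hi⟩ ⟨j, hj⟩ h)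
  simpa [Bgen, Commute, SemiconjBy] using this

theorem bn_serre {n i j : ℕ} (h : i + 1 = j ∨ j + 1 = i) (hi : i < n) (hj : j < n) :
    bn n i * bn n i * bn n j + bn n j * bn n i * bn n i =
      tt • (bn n i * bn n j * bn n i) + bn n j := by
  simp only [bn, hi, hj, dif_pos]
  have := RingQuot.mkAlgHom_rel (RatFunc ℚ) (UiRel.serre (n := n) ⟨i, hi⟩ ⟨j, hj⟩ h)
  simpa [Bgen] using this

theorem bw_comm {n : ℕ} {u v : List ℕ} (h : ∀ a ∈ u, ∀ b ∈ v, a + 1 < b) (hv : Lt n v) :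
    Commute (bw n u) (bw n v) := by
  apply Commute.list_prod_left
  intro x hx
  apply Commute.list_prod_right
  intro y hy
  obtain ⟨a, ha, rfl⟩ := List.mem_map.1 hx
  obtain ⟨b, hb, rfl⟩ := List.mem_map.1 hy
  exact bn_comm (h a ha b hb) (hv b hb)

/-- The product `B_i B_{i+1} ⋯ B_{i+l-1}`. -/
noncomputable def X (n i l : ℕ) : Ui n := bw n (List.range' i l)

theorem X_succ (n i l : ℕ) : X n i (l + 1) = X n i l * bn n (i + l) := by
  rw [X, List.range'_concat, bw_append, bw_singleton, one_mul]
  rfl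

theorem X_succ' (n i l : ℕ) : X n i (l + 1) = bn n i * X n (i + 1) l := by
  rw [X, List.range'_succ, bw_cons]
  rfl

/-- The Serre relation between a generator and a segment ending just before it. -/
theorem serre_left {n i y r : ℕ} (hr : r = i + (y + 1)) (h : r < n) :
    bn n r * bn n r * X n i (y + 1) + X n i (y + 1) * bn n r * bn n r =
      tt • (bn n r * X n i (y + 1) * bn n r) + X n i (y + 1) := by
  subst hr
  have hc : bn n (i + (y + 1)) * X n i y = X n i y * bn n (i + (y + 1)) := by
    have := bw_comm (n := n) (u := List.range' i y) (v := [i + (y + 1)])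
      (by
        intro a ha b hb
        rw [List.mem_range'_1] at ha
        rw [List.mem_singleton] at hb
        omega) (Lt.cons h Lt.nil)
    rw [bw_singleton] at this
    exact this.eq.symm
  have hs := bn_serre (n := n) (i := i + (y + 1)) (j := i + y) (Or.inr (by omega)) h (by omega)
  rw [X_succ]
  generalize bn n (i + (y + 1)) = B at *
  generalize bn n (i + y) = C at *
  generalize X n i y = W at *
  calc B * B * (W * C) + W * C * B * B = W * (B * B * C + C * B * B) := by
        rw [mul_add]
        congr 1
        · rw [mul_assoc B B, ← mul_assoc B W, hc, mul_assoc W B, ← mul_assoc B W, hc]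
          simp only [mul_assoc]
        · simp only [mul_assoc]
    _ = _ := by
        rw [hs, mul_add, mul_smul_comm, ← mul_assoc B W, hc]
        simp only [mul_assoc]

/-- The Serre relation between a generator and a segment starting just after it. -/
theorem serre_right {n z r : ℕ} (h : r + 1 + (z + 1) ≤ n) :
    bn n r * bn n r * X n (r + 1) (z + 1) + X n (r + 1) (z + 1) * bn n r * bn n r =
      tt • (bn n r * X n (r + 1) (z + 1) * bn n r) + X n (r + 1) (z + 1) := by
  have hc : bn n r * X n (r + 1 + 1) z = X n (r + 1 + 1) z * bn n r := by
    have := bw_comm (n := n) (u := [r]) (v := List.range' (r + 1 + 1) z)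
      (by
        intro a ha b hb
        rw [List.mem_range'_1] at hb
        rw [List.mem_singleton] at ha
        omega) (Lt.range' (by omega))
    rw [bw_singleton] at this
    exact this.eq
  have hs := bn_serre (n := n) (i := r) (j := r + 1) (Or.inl rfl) (by omega) (by omega)
  rw [X_succ']
  generalize bn n r = B at *
  generalize bn n (r + 1) = C at *
  generalize X n (r + 1 + 1) z = W at *
  calc B * B * (C * W) + C * W * B * B = (B * B * C + C * B * B) * W := by
        rw [add_mul]
        congr 1
        · simp only [mul_assoc]
        · rw [mul_assoc C W, ← hc, mul_assoc C, mul_assoc B W, ← hc]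
          simp only [mul_assoc]
    _ = _ := by
        rw [hs, add_mul, smul_mul_assoc, mul_assoc (B * C), hc]
        simp only [mul_assoc]

/-- The rewriting rule for an interior letter `r = i + y + 1` following the segment from `i` to
`r + z + 1`. -/
theorem interior_rule {n i y r z : ℕ} (hr : r = i + (y + 1)) (h : r + 1 + (z + 1) ≤ n) :
    X n i (y + 1) * bn n r * X n (r + 1) (z + 1) * bn n r =
      bn n r * X n i (y + 1) * bn n r * X n (r + 1) (z + 1)
        + X n (r + 1) (z + 1) * bn n r * X n i (y + 1) * bn n r
        - bn n r * X n (r + 1) (z + 1) * bn n r * X n i (y + 1) := by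
  refine serre_commutator _ _ _ ?_ (serre_left hr (by omega)) (serre_right h)
  refine (bw_comm ?_ (Lt.range' h)).eq
  intro a ha b hb
  rw [List.mem_range'_1] at ha hb
  omega

/-! ### Spans of words -/

/-- The `ℤ[q, q⁻¹]`-span of the products along the words in `0, …, n-1` that satisfy `P`. -/
noncomputable def Sp (n : ℕ) (P : List ℕ → Prop) : Submodule LaurentInt (Ui n) :=
  Submodule.span LaurentInt (bw n '' {u | Lt n u ∧ P u})

theorem mem_Sp {n : ℕ} {P : List ℕ → Prop} {x : Ui n} (u : List ℕ) (hu : Lt n u) (hP : P u)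
    (hx : x = bw n u) : x ∈ Sp n P :=
  hx ▸ Submodule.subset_span ⟨u, ⟨hu, hP⟩, rfl⟩

theorem tt_smul_mem {n : ℕ} {P : List ℕ → Prop} {x : Ui n} (hx : x ∈ Sp n P) :
    tt • x ∈ Sp n P :=
  (Sp n P).smul_mem (⟨tt, tt_mem⟩ : LaurentInt) hx

theorem Sp_ctx {n : ℕ} {P Q : List ℕ → Prop} {x : Ui n} (v₁ v₂ : List ℕ) (h₁ : Lt n v₁)
    (h₂ : Lt n v₂) (hPQ : ∀ u, P u → Q (v₁ ++ u ++ v₂)) (hx : x ∈ Sp n P) :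
    bw n v₁ * x * bw n v₂ ∈ Sp n Q := by
  induction hx using Submodule.span_induction with
  | mem x hx =>
    obtain ⟨u, ⟨hu, hP⟩, rfl⟩ := hx
    exact mem_Sp (v₁ ++ u ++ v₂) ((h₁.append hu).append h₂) (hPQ u hP) (by simp only [bw_append])
  | zero => simp
  | add x y _ _ hx hy => rw [mul_add, add_mul]; exact add_mem hx hy
  | smul c x _ hx =>
    rw [mul_smul_comm, smul_mul_assoc]
    exact Submodule.smul_mem _ c hx

/-- The words of length less than `L`, and those of length `L` with first letter above `i`. All of
them precede, in the order `≺`, every word of length `L` starting with `i`. -/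
def V (i L : ℕ) (u : List ℕ) : Prop :=
  u.length < L ∨ (u.length = L ∧ ∃ x t, u = x :: t ∧ i < x)

theorem V.append {i L M : ℕ} {u v : List ℕ} (h : V i L u) (hM : M = L + v.length) :
    V i M (u ++ v) := by
  subst hM
  rcases h with h | ⟨h, x, t, rfl, hx⟩
  · left; simpa using h
  · right
    exact ⟨by rw [List.length_append, h], x, t ++ v, rfl, hx⟩

/-- The order `≺` on words in natural numbers. -/
abbrev PL : List ℕ → List ℕ → Prop := List.Shortlex (· > ·)

theorem PL_of_V {i L : ℕ} {u t : List ℕ} (h : V i L u) (hL : L = (i :: t).length) :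
    PL u (i :: t) := by
  subst hL
  rcases h with h | ⟨h, x, t, rfl, hx⟩
  · exact .of_length_lt h
  · exact .of_lex h (.rel hx)

theorem lex_append_right {α : Type*} {r : α → α → Prop} {u w : List α} (h : List.Lex r u w)
    (hl : u.length = w.length) (v v' : List α) : List.Lex r (u ++ v) (w ++ v') := by
  induction h with
  | nil => simp at hl
  | cons _ ih => exact .cons (ih (by simpa using hl))
  | rel h => exact .rel h

theorem PL_ctx {u w : List ℕ} (h : PL u w) (v₁ v₂ : List ℕ) :
    PL (v₁ ++ u ++ v₂) (v₁ ++ w ++ v₂) := by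
  rw [List.append_assoc, List.append_assoc]
  apply List.Shortlex.append_left
  rcases List.shortlex_def.1 h with h | ⟨h, h'⟩
  · exact .of_length_lt (by simpa using h)
  · exact .of_lex (by simpa using h) (lex_append_right h' h _ _)

/-! ### Rewriting rules -/

theorem X_add (n i a b : ℕ) : X n i (a + b) = X n i a * X n (i + a) b := by
  simp only [X]
  rw [← bw_append, List.range'_append_1]

theorem X_one (n i : ℕ) : X n i 1 = bn n i := by
  simp [X, bw]

theorem V_cons {i x L : ℕ} {t : List ℕ} (hx : i < x) (hL : t.length + 1 ≤ L) :
    V i L (x :: t) := by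
  rcases hL.lt_or_eq with h | h
  · exact .inl h
  · exact .inr ⟨h, x, t, rfl, hx⟩

/-- A segment from `i`, followed by a letter that it contains in a non-initial position, is a
combination of shorter words and of words starting above `i`. -/
theorem rule_b {n i y m : ℕ} (hm : i + (y + 1) + 1 + m ≤ n) :
    X n i (y + 1 + 1 + m) * bn n (i + (y + 1)) ∈ Sp n (V i (y + 1 + 1 + m + 1)) := by
  obtain ⟨r, hr⟩ : ∃ r, r = i + (y + 1) := ⟨_, rfl⟩
  have hrn : Lt n [r] := Lt.cons (by omega) Lt.nil
  have hY : Lt n (List.range' i (y + 1)) := Lt.range' (by omega)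
  rw [X_add, X_succ, ← hr]
  rcases m with _ | z
  · have h := serre_left hr (by omega : r < n)
    have e : X n i (y + 1) * bn n r * X n (i + (y + 1 + 1)) 0 * bn n r =
        tt • (bn n r * X n i (y + 1) * bn n r) + X n i (y + 1)
          - bn n r * bn n r * X n i (y + 1) := by
      rw [← h]
      simp [X, bw]
    rw [e]
    refine sub_mem (add_mem (tt_smul_mem ?_) ?_) ?_
    · refine mem_Sp ([r] ++ List.range' i (y + 1) ++ [r]) ((hrn.append hY).append hrn)
        (V_cons (by omega) (by simp)) (by simp only [bw_append, bw_singleton, X])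
    · exact mem_Sp (List.range' i (y + 1)) hY (.inl (by simp)) rfl
    · refine mem_Sp ([r] ++ [r] ++ List.range' i (y + 1)) ((hrn.append hrn).append hY)
        (V_cons (by omega) (by simp)) (by simp only [bw_append, bw_singleton, X])
  · have hZ : Lt n (List.range' (r + 1) (z + 1)) := Lt.range' (by omega)
    rw [show i + (y + 1 + 1) = r + 1 by omega, interior_rule hr (by omega)]
    refine sub_mem (add_mem ?_ ?_) ?_
    · exact mem_Sp ([r] ++ List.range' i (y + 1) ++ [r] ++ List.range' (r + 1) (z + 1))
        (((hrn.append hY).append hrn).append hZ)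
        (V_cons (by omega) (by simp; omega)) (by simp only [bw_append, bw_singleton, X])
    · refine mem_Sp (List.range' (r + 1) (z + 1) ++ [r] ++ List.range' i (y + 1) ++ [r])
        (((hZ.append hrn).append hY).append hrn) ?_ (by simp only [bw_append, bw_singleton, X])
      rw [List.range'_succ]
      exact V_cons (by omega) (by simp; omega)
    · exact mem_Sp ([r] ++ List.range' (r + 1) (z + 1) ++ [r] ++ List.range' i (y + 1))
        (((hrn.append hZ).append hrn).append hY)
        (V_cons (by omega) (by simp; omega)) (by simp only [bw_append, bw_singleton, X])

/-- Up to shorter words and words starting above `i`, a segment from `i` followed by the same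
segment prolonged by one letter is `[2]` times the product in the opposite order. -/
theorem rule_c {n i : ℕ} (l : ℕ) (hl : i + (l + 1) < n) :
    X n i (l + 1) * X n i (l + 1) * bn n (i + (l + 1))
      - tt • (X n i (l + 1) * bn n (i + (l + 1)) * X n i (l + 1))
      ∈ Sp n (V i (2 * (l + 1) + 1)) := by
  induction l with
  | zero =>
    have h := bn_serre (n := n) (i := i) (j := i + 1) (.inl rfl) (by omega) hl
    have hi : Lt n [i] := Lt.cons (by omega) Lt.nil
    have hj : Lt n [i + 1] := Lt.cons hl Lt.nil
    simp only [zero_add, X_one]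
    have e : bn n i * bn n i * bn n (i + 1) - tt • (bn n i * bn n (i + 1) * bn n i) =
        bn n (i + 1) - bn n (i + 1) * bn n i * bn n i := by
      rw [sub_eq_sub_iff_add_eq_add, h]
      abel
    rw [e]
    refine sub_mem ?_ ?_
    · exact mem_Sp [i + 1] hj (V_cons (by omega) (by simp)) (bw_singleton _ _).symm
    · exact mem_Sp ([i + 1] ++ [i] ++ [i]) ((hj.append hi).append hi)
        (V_cons (by omega) (by simp)) (by simp only [bw_append, bw_singleton])
  | succ l ih =>
    obtain ⟨r, hr⟩ : ∃ r, r = i + (l + 1) := ⟨_, rfl⟩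
    have hrn : Lt n [r] := Lt.cons (by omega) Lt.nil
    have hZ : Lt n [r + 1] := Lt.cons (by omega) Lt.nil
    have hY : Lt n (List.range' i (l + 1)) := Lt.range' (by omega)
    have hYZ : X n i (l + 1) * bn n (r + 1) = bn n (r + 1) * X n i (l + 1) := by
      have := bw_comm (n := n) (u := List.range' i (l + 1)) (v := [r + 1])
        (by
          intro a ha b hb
          rw [List.mem_range'_1] at ha
          rw [List.mem_singleton] at hb
          omega) hZ
      rw [bw_singleton] at this
      exact this.eq
    have hI := interior_rule (n := n) (z := 0) hr (by omega)
    have h1 := rule_b (n := n) (i := i) (y := l) (m := 1) (by omega)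
    have h2 := ih (by omega)
    rw [← hr] at h1 h2
    rw [X_add, X_succ, ← hr, X_one, show i + (l + 1 + 1) = r + 1 by omega] at h1
    rw [X_one] at hI
    rw [show i + (l + 1 + 1) = r + 1 by omega, X_succ, ← hr]
    have h1' := Sp_ctx (Q := V i (2 * (l + 1 + 1) + 1)) [] (List.range' i (l + 1)) Lt.nil hY
      (fun u hu => hu.append (by simp; omega)) h1
    have h2' := Sp_ctx (Q := V i (2 * (l + 1 + 1) + 1)) [] ([r + 1] ++ [r]) Lt.nil
      (hZ.append hrn) (fun u hu => hu.append (by simp; omega)) h2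
    have h3 : bn n (r + 1) * X n i (l + 1) * bn n r * X n i (l + 1) * bn n r ∈
        Sp n (V i (2 * (l + 1 + 1) + 1)) :=
      mem_Sp ([r + 1] ++ List.range' i (l + 1) ++ [r] ++ List.range' i (l + 1) ++ [r])
        ((((hZ.append hY).append hrn).append hY).append hrn)
        (V_cons (by omega) (by simp; omega)) (by simp only [bw_append, bw_singleton, X])
    have h4 := sub_mem (add_mem h1' h2') h3
    change bw n [] * _ * X n i (l + 1) + _ - _ ∈ _ at h4
    rw [bw_append, bw_singleton, bw_singleton, show bw n [] = 1 by simp [bw], one_mul, one_mul]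
      at h4
    generalize X n i (l + 1) = Y at *
    generalize bn n (r + 1) = Z at *
    generalize bn n r = B at *
    convert h4 using 1
    -- `B` commutes with `YBZ - ZBY`, hence `YBYBZ = YBZBY + YYBZB - ZYBYB`
    have e1 : Y * B * (Y * B) * Z = Y * B * Z * B * Y + Y * Y * B * Z * B
        - Z * Y * B * Y * B := by
      have h : B * Y * B * Z = Y * B * Z * B - Z * B * Y * B + B * Z * B * Y := by
        rw [hI]; abel
      calc Y * B * (Y * B) * Z = Y * (B * Y * B * Z) := by simp only [mul_assoc]
        _ = Y * B * Z * B * Y + Y * Y * B * Z * B - (Y * Z) * B * Y * B := by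
          rw [h]
          simp only [mul_add, mul_sub, mul_assoc]
          abel
        _ = _ := by rw [hYZ]
    have e2 : Y * B * Z * (Y * B) = Y * B * Y * (Z * B) := by
      rw [mul_assoc (Y * B) Z, ← mul_assoc Z, ← hYZ]
      simp only [mul_assoc]
    rw [e1, e2, sub_mul, smul_mul_assoc]
    simp only [mul_assoc]
    abel

/-! ### Reduction to decreasing concatenations of segments -/

/-- The product along `w` is an integral combination of products along words preceding `w`. -/
def Red (n : ℕ) (w : List ℕ) : Prop := bw n w ∈ Sp n fun u => PL u w

theorem Red.ctx {n : ℕ} {w : List ℕ} (h : Red n w) {v₁ v₂ : List ℕ} (h₁ : Lt n v₁)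
    (h₂ : Lt n v₂) : Red n (v₁ ++ w ++ v₂) := by
  rw [Red, bw_append, bw_append]
  exact Sp_ctx v₁ v₂ h₁ h₂ (fun u hu => PL_ctx hu v₁ v₂) h

theorem red_a {n a b : ℕ} (h : a + 1 < b) (hb : b < n) : Red n [a, b] := by
  refine mem_Sp [b, a] (Lt.cons hb (Lt.cons (by omega) Lt.nil)) (.of_lex rfl (.rel (by omega))) ?_
  simpa [bw] using (bn_comm h hb).eq

theorem Sp_mono {n : ℕ} {P Q : List ℕ → Prop} (h : ∀ u, P u → Q u) : Sp n P ≤ Sp n Q :=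
  Submodule.span_mono (Set.image_mono fun _ hu => ⟨hu.1, h _ hu.2⟩)

theorem red_b {n i m : ℕ} (h : i + 2 + m ≤ n) : Red n (List.range' i (m + 2) ++ [i + 1]) := by
  have h1 := rule_b (n := n) (i := i) (y := 0) (m := m) (by omega)
  rw [show 0 + 1 + 1 + m = m + 2 by omega] at h1
  rw [Red, bw_append, bw_singleton]
  refine Sp_mono (fun u hu => ?_) h1
  rw [List.range'_succ]
  exact PL_of_V hu (by simp)

theorem red_c {n i l : ℕ} (h : i + (l + 1) < n) :
    Red n (List.range' i (l + 1) ++ List.range' i (l + 2)) := by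
  have h1 := rule_c (n := n) (i := i) l h
  have hY : Lt n (List.range' i (l + 1)) := Lt.range' (by omega)
  have h2 := add_mem (Sp_mono (Q := fun u => PL u (List.range' i (l + 1) ++ List.range' i (l + 2)))
    (fun u hu => by
      rw [List.range'_succ]
      exact PL_of_V hu (by simp; omega)) h1)
    (tt_smul_mem (n := n) (x := X n i (l + 1) * bn n (i + (l + 1)) * X n i (l + 1))
      (P := fun u => PL u (List.range' i (l + 1) ++ List.range' i (l + 2)))
      (mem_Sp (List.range' i (l + 1) ++ ([i + (l + 1)] ++ List.range' i (l + 1)))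
        (hY.append ((Lt.cons h Lt.nil).append hY))
        (by
          apply List.Shortlex.append_left
          rw [List.range'_succ (s := i) (n := l + 1)]
          exact .of_lex (by simp) (.rel (by omega)))
        (by simp only [bw_append, bw_singleton, X, mul_assoc])))
  rw [sub_add_cancel] at h2
  rw [Red, bw_append]
  change X n i (l + 1) * X n i (l + 2) ∈ _
  rw [X_succ n i (l + 1), ← mul_assoc]
  exact h2

theorem SegGe.trans {x y z : ℕ × ℤ} (h : SegGe x y) (h' : SegGe y z) : SegGe x z := by
  unfold SegGe at *
  omega

theorem Desc.cons {x y : ℕ × ℤ} {T : List (ℕ × ℤ)} (h : Desc (y :: T)) (hx : 0 < x.2)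
    (hxy : SegGe x y) : Desc (x :: y :: T) := by
  refine ⟨List.forall_mem_cons.2 ⟨hx, h.1⟩, List.pairwise_cons.2 ⟨?_, h.2⟩⟩
  intro z hz
  rcases List.mem_cons.1 hz with rfl | hz
  · exact hxy
  · exact hxy.trans ((List.pairwise_cons.1 h.2).1 z hz)

theorem Desc.singleton {x : ℕ × ℤ} (hx : 0 < x.2) : Desc [x] := by
  simpa [Desc] using hx

theorem Desc.tail {x : ℕ × ℤ} {T : List (ℕ × ℤ)} (h : Desc (x :: T)) : Desc T :=
  ⟨fun y hy => h.1 y (by simp [hy]), h.2.of_cons⟩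

theorem segw_natCast (a k : ℕ) : segw (a, (k : ℤ)) = List.range' a k := by
  simp [segw]

/-- A word that is not a decreasing concatenation of segments contains one of the patterns of
`red_a`, `red_b`, `red_c`. -/
theorem desc_or_red {n : ℕ} (w : List ℕ) (hw : Lt n w) :
    (∃ T, Desc T ∧ w = cat T) ∨ Red n w := by
  induction w with
  | nil => exact .inl ⟨[], by simp [Desc], rfl⟩
  | cons a w ih =>
    have ha : Lt n [a] := Lt.cons (hw a (by simp)) Lt.nil
    have hw' : Lt n w := fun b hb => hw b (by simp [hb])
    rcases ih hw' with ⟨T, hT, rfl⟩ | h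
    swap
    · right
      simpa using h.ctx ha Lt.nil
    have hone : [a] = segw (a, 1) := by simp [segw]
    rcases T with _ | ⟨⟨i, d⟩, T⟩
    · exact .inl ⟨[(a, 1)], Desc.singleton one_pos, by simp [cat, segw]⟩
    have hd : 0 < d := hT.1 (i, d) (by simp)
    obtain ⟨k, rfl⟩ : ∃ k : ℕ, d = ((k + 1 : ℕ) : ℤ) := ⟨d.toNat - 1, by omega⟩
    have hc : cat ((i, ((k + 1 : ℕ) : ℤ)) :: T) = List.range' i (k + 1) ++ cat T := by
      rw [cat_cons, segw_natCast]
    rcases lt_trichotomy i a with h | h | h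
    · left
      refine ⟨(a, 1) :: _, hT.cons one_pos (.inl h), ?_⟩
      rw [cat_cons (a, 1), ← hone]
      rfl
    · subst h
      rcases k with _ | k
      · left
        refine ⟨(i, 1) :: _, hT.cons one_pos (.inr ⟨rfl, by simp⟩), ?_⟩
        rw [cat_cons (i, 1), ← hone]
        rfl
      · right
        have e : i :: cat ((i, ((k + 1 + 1 : ℕ) : ℤ)) :: T) =
            [] ++ (List.range' i (0 + 1) ++ List.range' i (0 + 2)) ++
              (List.range' (i + 2) k ++ cat T) := by
          rw [hc, List.range'_succ, List.range'_succ]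
          simp [List.range'_succ]
        rw [e] at hw ⊢
        refine Red.ctx (red_c ?_) Lt.nil hw.of_append.2
        have := hw (i + 1) (by simp [List.range'_succ])
        omega
    · rcases (Nat.succ_le_of_lt h).lt_or_eq with h | h
      · right
        have e : a :: cat ((i, ((k + 1 : ℕ) : ℤ)) :: T) =
            [] ++ [a, i] ++ (List.range' (i + 1) k ++ cat T) := by
          rw [hc, List.range'_succ]
          simp
        rw [e] at hw ⊢
        exact (red_a (by omega) (hw i (by simp))).ctx Lt.nil hw.of_append.2
      · obtain rfl : a + 1 = i := h
        have e : a :: cat ((a + 1, ((k + 1 : ℕ) : ℤ)) :: T) = List.range' a (k + 2) ++ cat T := by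
          rw [hc, List.range'_succ (s := a)]
          simp
        have e' : a :: cat ((a + 1, ((k + 1 : ℕ) : ℤ)) :: T) =
            cat ((a, ((k + 2 : ℕ) : ℤ)) :: T) := by
          rw [e, cat_cons, segw_natCast]
        rcases T with _ | ⟨⟨j, f⟩, T⟩
        · exact .inl ⟨_, Desc.singleton (by simp; omega), e'⟩
        have hT' := hT.tail
        have hf : 0 < f := hT'.1 (j, f) (by simp)
        have hj : SegGe (a + 1, ((k + 1 : ℕ) : ℤ)) (j, f) :=
          (List.pairwise_cons.1 hT.2).1 _ (by simp)
        have hj1 : j ≤ a + 1 := by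
          rcases hj with h | h
          · exact le_of_lt h
          · exact h.1.le
        by_cases hg : SegGe (a, ((k + 2 : ℕ) : ℤ)) (j, f)
        · exact .inl ⟨_, hT'.cons (by simp; omega) hg, e'⟩
        right
        simp only [SegGe, not_or, not_and, not_lt, not_le] at hg
        obtain ⟨m, rfl⟩ : ∃ m : ℕ, f = ((m + 1 : ℕ) : ℤ) := ⟨f.toNat - 1, by omega⟩
        have e3 := e
        rw [cat_cons (j, _), segw_natCast] at e3
        rw [e3] at hw ⊢
        rcases hj1.lt_or_eq with h | h
        · obtain rfl : j = a := by omega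
          have hm := hg.2 rfl
          obtain ⟨p, rfl⟩ : ∃ p, m = k + 2 + p := ⟨m - (k + 2), by omega⟩
          have e2 : List.range' j (k + 2) ++ (List.range' j (k + 2 + p + 1) ++ cat T) =
              [] ++ (List.range' j (k + 1 + 1) ++ List.range' j (k + 1 + 2)) ++
                (List.range' (j + (k + 3)) p ++ cat T) := by
            rw [show k + 2 + p + 1 = (k + 3) + p by omega,
              ← List.range'_append_1 (s := j) (m := k + 3) (n := p)]
            simp only [List.nil_append, List.append_assoc]
          rw [e2] at hw ⊢
          refine Red.ctx (red_c ?_) Lt.nil hw.of_append.2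
          apply hw
          simp only [List.mem_append, List.mem_range'_1]
          omega
        · subst h
          have e2 : List.range' a (k + 2) ++ (List.range' (a + 1) (m + 1) ++ cat T) =
              [] ++ (List.range' a (k + 2) ++ [a + 1]) ++
                (List.range' (a + 1 + 1) m ++ cat T) := by
            rw [List.range'_succ (s := a + 1)]
            simp
          rw [e2] at hw ⊢
          refine Red.ctx (red_b ?_) Lt.nil hw.of_append.2
          have := hw (a + k + 1) (by
            simp only [List.mem_append, List.mem_range'_1]
            omega)
          omega

/-! ### Integrality -/

theorem lex_flip {α : Type*} {r s : α → α → Prop} (hrs : ∀ a b, r a b → s b a) {x y : List α}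
    (h : List.Lex r x y) (hl : x.length = y.length) : List.Lex s y x := by
  induction h with
  | nil => simp at hl
  | cons _ ih => exact .cons (ih (by simpa using hl))
  | rel h => exact .rel (hrs _ _ h)

theorem precLt_wf (n : ℕ) : WellFounded (PrecLt (n := n)) := by
  refine Subrelation.wf ?_ (List.Shortlex.wf (r := ((· > ·) : Fin n → Fin n → Prop))
    wellFounded_gt)
  intro x y h
  rcases h with h | ⟨h, h'⟩
  · exact .of_length_lt h
  · exact .of_lex h (lex_flip (fun _ _ h => h) h' h.symm)

theorem lex_cons_cases {α : Type*} {r : α → α → Prop} {a b : α} {x y : List α}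
    (h : List.Lex r (a :: x) (b :: y)) : r a b ∨ (a = b ∧ List.Lex r x y) := by
  cases h with
  | cons h => exact .inr ⟨rfl, h⟩
  | rel h => exact .inl h

theorem lex_of_map {n : ℕ} (x y : List (Fin n))
    (h : List.Lex (· > ·) (x.map Fin.val) (y.map Fin.val)) : List.Lex (· > ·) x y := by
  induction x generalizing y with
  | nil =>
    rcases y with _ | ⟨b, y⟩
    · simp at h
    · exact .nil
  | cons a x ih =>
    rcases y with _ | ⟨b, y⟩
    · simp at h
    · rcases lex_cons_cases h with h | ⟨h, h'⟩
      · exact .rel h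
      · obtain rfl := Fin.ext h
        exact .cons (ih y h')

theorem precLt_of_PL {n : ℕ} {x y : List (Fin n)} (h : PL (x.map Fin.val) (y.map Fin.val)) :
    PrecLt x y := by
  rcases List.shortlex_def.1 h with h | ⟨h, h'⟩
  · exact .inl (by simpa using h)
  · have hl : x.length = y.length := by simpa using h
    exact .inr ⟨hl, lex_flip (fun _ _ h => h) (lex_of_map x y h') hl⟩

theorem lexLt_trans {n : ℕ} {x y z : List (Fin n)} (h : LexLt x y) (h' : LexLt y z) : LexLt x z :=
  List.lt_trans (α := Fin n) h h'

theorem precLe_of_precLt {n : ℕ} {x y z : List (Fin n)} (h : PrecLe x y) (h' : PrecLt y z) :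
    PrecLe x z := by
  rcases h with h | rfl
  swap
  · exact .inl h'
  left
  rcases h with h | ⟨h, h1⟩ <;> rcases h' with h' | ⟨h', h2⟩
  · exact .inl (h.trans h')
  · exact .inl (h' ▸ h)
  · exact .inl (h ▸ h')
  · exact .inr ⟨h.trans h', lexLt_trans h2 h1⟩

theorem exists_map_val {n : ℕ} (u : List ℕ) (hu : Lt n u) :
    ∃ U : List (Fin n), U.map Fin.val = u := by
  lift u to List (Fin n) using hu
  exact ⟨u, rfl⟩

/-- Every word is an integral combination of good words that do not exceed it. -/
theorem mem_span_good {n : ℕ} (w : List (Fin n)) :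
    Bword (Bgen n) w ∈ Submodule.span LaurentInt
      (Bword (Bgen n) '' {g | IsGood (RatFunc ℚ) (Bgen n) g ∧ PrecLe g w}) := by
  induction w using (precLt_wf n).induction with
  | _ w ih =>
  have hw : Lt n (w.map Fin.val) := by
    intro a ha
    obtain ⟨b, _, rfl⟩ := List.mem_map.1 ha
    exact b.2
  rcases desc_or_red _ hw with ⟨T, hT, h⟩ | h
  · exact Submodule.subset_span ⟨w, ⟨isGood_of_desc w T hT h, .inr rfl⟩, rfl⟩
  · rw [Red, bw_map] at h
    refine Submodule.span_le.2 ?_ h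
    rintro _ ⟨u, ⟨hu, hP⟩, rfl⟩
    obtain ⟨U, rfl⟩ := exists_map_val u hu
    have hU := precLt_of_PL hP
    rw [bw_map]
    refine Submodule.span_mono (Set.image_mono ?_) (ih U hU)
    exact fun g hg => ⟨hg.1, precLe_of_precLt hg.2 hU⟩

/-- Let `l₁ = v[i,j)` and `l₂ = v[r,s)` be segments with either `i < r`, or `i = r` and
`j < s`. Then the word `l₁l₂` is integral for `U^ı(sl_{n+1})`. -/
theorem segment_pairs_integral {n : ℕ} (l₁ l₂ : List (Fin n))
    (h₁ : IsSegment l₁) (h₂ : IsSegment l₂)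
    (hcase : (∃ a ∈ l₁.head?, ∃ c ∈ l₂.head?, (a : ℕ) < (c : ℕ)) ∨
      (l₁.head? = l₂.head? ∧ l₁.length < l₂.length)) :
    IsIntegralWord (Bgen n) (l₁ ++ l₂) := by
  obtain ⟨t, ht, c, hc⟩ :=
    (Submodule.mem_span_image_iff_exists_fun LaurentInt).1 (mem_span_good (l₁ ++ l₂))
  classical
  refine ⟨t, fun g => if h : g ∈ t then (c ⟨g, h⟩ : RatFunc ℚ) else 0, fun g hg => ht hg, ?_, ?_⟩
  · intro g hg
    simp only [hg, dif_pos]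
    exact (c ⟨g, hg⟩).2
  · rw [← hc, ← Finset.sum_coe_sort t]
    refine Finset.sum_congr rfl fun g _ => ?_
    simp only [g.2, dif_pos]
    rfl
end
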